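/- arXiv:1509.00535 — 8 statements merged into one kernel-verified Lean document; each statement's English description precedes it below -/
import Mathlib

section
/- Let N ≥ 1 and k ≥ 1, and let 𝒬 = (q_1, …, q_{N^k}) be a tuple of vectors in Δ_N with associated k-th order transition matrix Q^(k). Then Q^(k) = M^k_k C^{k+1}_1 B^k_k(𝒬) and Q^(k) = C^k_1 M^k_{k-1} B^k_k(𝒬). -/
open Matrix BigOperators Filter Topology

noncomputable section

/-- Cast a `Fin`-indexed matrix along equalities of the dimensions. -/
def castM {a b a' b' : ℕ} (ha : a = a') (hb : b = b') (A : Matrix (Fin a) (Fin b) ℝ) :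
    Matrix (Fin a') (Fin b') ℝ :=
  Matrix.reindex (finCongr ha) (finCongr hb) A

/-- Kronecker product (row-major convention) of `Fin`-indexed real matrices. -/
def kron {a b c d : ℕ} (A : Matrix (Fin a) (Fin b) ℝ) (B : Matrix (Fin c) (Fin d) ℝ) :
    Matrix (Fin (a * c)) (Fin (b * d)) ℝ :=
  Matrix.of fun i j => A i.divNat j.divNat * B i.modNat j.modNat

/-- Standard basis column vector `e_{n,i}` (as an `n × 1` matrix). -/
def eCol (n : ℕ) (i : Fin n) : Matrix (Fin n) (Fin 1) ℝ :=
  Matrix.of fun r _ => if r = i then (1 : ℝ) else 0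

/-- Standard basis row vector `e_{n,i}ᵀ` (as a `1 × n` matrix). -/
def eRow (n : ℕ) (i : Fin n) : Matrix (Fin 1) (Fin n) ℝ :=
  Matrix.of fun _ c => if c = i then (1 : ℝ) else 0

/-- `E_{n,i} = e_{n,i} e_{n,i}ᵀ`. -/
def EE (n : ℕ) (i : Fin n) : Matrix (Fin n) (Fin n) ℝ :=
  Matrix.of fun r c => if r = i ∧ c = i then (1 : ℝ) else 0

/-- All-ones row vector `1_nᵀ` (as a `1 × n` matrix). -/
def onesRow (n : ℕ) : Matrix (Fin 1) (Fin n) ℝ := Matrix.of fun _ _ => (1 : ℝ)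

/-- A column vector (an `n × 1` matrix) is a simplex vector: nonnegative entries summing to 1. -/
def IsSimplex {n : ℕ} (v : Matrix (Fin n) (Fin 1) ℝ) : Prop :=
  (∀ i, 0 ≤ v i 0) ∧ ∑ i, v i 0 = 1

/-- A matrix is column-stochastic: each column is a simplex vector. -/
def IsColStochastic {a b : ℕ} (A : Matrix (Fin a) (Fin b) ℝ) : Prop :=
  ∀ j, (∀ i, 0 ≤ A i j) ∧ ∑ i, A i j = 1

/-- The (0-based) index `b * i + j` corresponding to the 1-based index `b(i-1)+j`. -/
def pairIdx {a b : ℕ} (i : Fin a) (j : Fin b) : Fin (a * b) :=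
  ⟨b * i.val + j.val, by
    have h : b * (i.val + 1) ≤ b * a := Nat.mul_le_mul le_rfl i.isLt
    have h2 : b * (i.val + 1) = b * i.val + b := by ring
    have h3 : b * a = a * b := Nat.mul_comm b a
    have h4 : j.val < b := j.isLt
    omega⟩

/-- Commutation matrix `C_{n,m} = ∑_i e_{m,i}ᵀ ⊗ E_n ⊗ e_{m,i}`. -/
def commMat (n m : ℕ) : Matrix (Fin (n * m)) (Fin (n * m)) ℝ :=
  ∑ i : Fin m,
    castM (by ring) (by ring)
      (kron (kron (eRow m i) (1 : Matrix (Fin n) (Fin n) ℝ)) (eCol m i))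

/-- Marginalization matrix `M^k_m = E_{N^m} ⊗ 1_Nᵀ ⊗ E_{N^{k-m}}`. -/
def Marg (N k m : ℕ) (hm : m ≤ k) : Matrix (Fin (N ^ k)) (Fin (N ^ (k + 1))) ℝ :=
  castM (by rw [mul_one, ← pow_add]; exact congrArg (N ^ ·) (by omega))
    (by rw [← pow_succ, ← pow_add]; exact congrArg (N ^ ·) (by omega))
    (kron (kron (1 : Matrix (Fin (N ^ m)) (Fin (N ^ m)) ℝ) (onesRow N))
      (1 : Matrix (Fin (N ^ (k - m))) (Fin (N ^ (k - m))) ℝ))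

/-- Branching matrix `B^k_m(𝒬) = ∑_{i,j} E_{N^m,i} ⊗ q_{N^{k-m}(i-1)+j} ⊗ E_{N^{k-m},j}`. -/
def Branch (N k m : ℕ) (hm : m ≤ k) (q : Fin (N ^ k) → Matrix (Fin N) (Fin 1) ℝ) :
    Matrix (Fin (N ^ (k + 1))) (Fin (N ^ k)) ℝ :=
  castM (by rw [← pow_succ, ← pow_add]; exact congrArg (N ^ ·) (by omega))
    (by rw [mul_one, ← pow_add]; exact congrArg (N ^ ·) (by omega))
    (∑ i : Fin (N ^ m), ∑ j : Fin (N ^ (k - m)),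
      kron (kron (EE (N ^ m) i)
          (q (finCongr (by rw [← pow_add]; exact congrArg (N ^ ·) (by omega)) (pairIdx i j))))
        (EE (N ^ (k - m)) j))

/-- Cycling matrix `C^k_m = C_{N^m, N^{k-m}}`. -/
def Cyc (N k m : ℕ) (hm : m ≤ k) : Matrix (Fin (N ^ k)) (Fin (N ^ k)) ℝ :=
  castM (by rw [← pow_add]; exact congrArg (N ^ ·) (by omega))
    (by rw [← pow_add]; exact congrArg (N ^ ·) (by omega))
    (commMat (N ^ m) (N ^ (k - m)))

/-- The block `Q_i` of a tuple `𝒬`: the `N × N` matrix with columns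
`q_{N(i-1)+1}, …, q_{N(i-1)+N}`. -/
def Qblk (N k : ℕ) (hk : 1 ≤ k) (q : Fin (N ^ k) → Matrix (Fin N) (Fin 1) ℝ)
    (i : Fin (N ^ (k - 1))) : Matrix (Fin N) (Fin N) ℝ :=
  Matrix.of fun r c =>
    q (finCongr (by rw [← pow_succ]; exact congrArg (N ^ ·) (by omega)) (pairIdx i c)) r 0

/-- The k-th order transition matrix `Q^(k) = C_{N,N^{k-1}} ∑_i E_{N^{k-1},i} ⊗ Q_i`. -/
def TransMat (N k : ℕ) (hk : 1 ≤ k) (q : Fin (N ^ k) → Matrix (Fin N) (Fin 1) ℝ) :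
    Matrix (Fin (N ^ k)) (Fin (N ^ k)) ℝ :=
  castM (by rw [← pow_succ']; exact congrArg (N ^ ·) (by omega))
      (by rw [← pow_succ']; exact congrArg (N ^ ·) (by omega)) (commMat N (N ^ (k - 1))) *
    ∑ i : Fin (N ^ (k - 1)),
      castM (by rw [← pow_succ]; exact congrArg (N ^ ·) (by omega))
        (by rw [← pow_succ]; exact congrArg (N ^ ·) (by omega))
        (kron (EE (N ^ (k - 1)) i) (Qblk N k hk q i))

/-- `MChain N m n = M^m_m M^{m+1}_{m+1} ⋯ M^{m+n}_{m+n}`. -/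
def MChain (N m : ℕ) : (n : ℕ) → Matrix (Fin (N ^ m)) (Fin (N ^ (m + n + 1))) ℝ
  | 0 => Marg N m m le_rfl
  | n + 1 => MChain N m n * Marg N (m + n + 1) (m + n + 1) le_rfl

/-- `BChain N Q m n = B^{m+n}_{m+n}(𝒬^{(m+n)}) ⋯ B^m_m(𝒬^{(m)})`. -/
def BChain (N : ℕ) (Q : (j : ℕ) → Fin (N ^ j) → Matrix (Fin N) (Fin 1) ℝ) (m : ℕ) :
    (n : ℕ) → Matrix (Fin (N ^ (m + n + 1))) (Fin (N ^ m)) ℝ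
  | 0 => Branch N m m le_rfl (Q m)
  | n + 1 => Branch N (m + n + 1) (m + n + 1) le_rfl (Q (m + n + 1)) * BChain N Q m n

/-- The k‑shift matrix `S(𝒬^(m), …, 𝒬^(k))` with `k = m + n`:
`M^m_m ⋯ M^k_k C^{k+1}_1 B^k_k(𝒬^(k)) ⋯ B^m_m(𝒬^(m))`. -/
def Shift (N m n : ℕ) (Q : (j : ℕ) → Fin (N ^ j) → Matrix (Fin N) (Fin 1) ℝ) :
    Matrix (Fin (N ^ m)) (Fin (N ^ m)) ℝ :=
  MChain N m n * Cyc N (m + n + 1) 1 (by omega) * BChain N Q m n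

/-- ℓ¹ norm of a column vector. -/
def l1 {n : ℕ} (v : Matrix (Fin n) (Fin 1) ℝ) : ℝ := ∑ i, |v i 0|

def PM (a b : ℕ) (f : ℕ → ℕ) : Matrix (Fin a) (Fin b) ℝ :=
  Matrix.of fun i j => if i.val = f j.val then (1 : ℝ) else 0

def TM (a b N : ℕ) (g : ℕ → ℕ → ℕ) (q : Fin b → Matrix (Fin N) (Fin 1) ℝ) :
    Matrix (Fin a) (Fin b) ℝ :=
  Matrix.of fun i j => ∑ x : Fin N, if i.val = g j.val x.val then q j x 0 else 0

lemma PM_mul_PM {a b c : ℕ} (f g : ℕ → ℕ) (h : ∀ x, x < c → g x < b) :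
    PM a b f * PM b c g = PM a c (fun x => f (g x)) := by
  ext i j
  simp only [Matrix.mul_apply, PM, Matrix.of_apply]
  rw [Finset.sum_eq_single (⟨g j.val, h _ j.isLt⟩ : Fin b)]
  · simp
  · intro s _ hs
    have : s.val ≠ g j.val := fun h' => hs (Fin.ext h')
    simp [this]
  · simp

lemma PM_mul_TM {a b c N : ℕ} (f : ℕ → ℕ) (g : ℕ → ℕ → ℕ) (q : Fin c → Matrix (Fin N) (Fin 1) ℝ)
    (h : ∀ x y, x < c → y < N → g x y < b) :
    PM a b f * TM b c N g q = TM a c N (fun x y => f (g x y)) q := by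
  ext i j
  simp only [Matrix.mul_apply, PM, TM, Matrix.of_apply, Finset.mul_sum]
  rw [Finset.sum_comm]
  refine Finset.sum_congr rfl fun x _ => ?_
  rw [Finset.sum_eq_single (⟨g j.val x.val, h _ _ j.isLt x.isLt⟩ : Fin b)]
  · simp
  · intro s _ hs
    have : s.val ≠ g j.val x.val := fun h' => hs (Fin.ext h')
    simp [this]
  · simp

lemma TM_congr {a c N : ℕ} (g g' : ℕ → ℕ → ℕ) (q : Fin c → Matrix (Fin N) (Fin 1) ℝ)
    (h : ∀ x y, x < c → y < N → g x y = g' x y) : TM a c N g q = TM a c N g' q := by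
  ext i j
  simp only [TM, Matrix.of_apply]
  refine Finset.sum_congr rfl fun x _ => ?_
  rw [h _ _ j.isLt x.isLt]

lemma castM_PM {a b a' b' : ℕ} (ha : a = a') (hb : b = b') (f : ℕ → ℕ) :
    castM ha hb (PM a b f) = PM a' b' f := by
  subst ha hb; rfl

lemma commMat_eq (n m : ℕ) :
    commMat n m = PM (n * m) (n * m) (fun x => (x % n) * m + x / n) := by
  ext r c
  have hr := r.isLt
  have hc := c.isLt
  have hc' : c.val < m * n := lt_of_lt_of_eq hc (mul_comm _ _)
  have hcm : c.val / n < m := Nat.div_lt_of_lt_mul hc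
  have hm : 0 < m := lt_of_le_of_lt (Nat.zero_le _) hcm
  have hrn : r.val / m < n := Nat.div_lt_of_lt_mul (lt_of_lt_of_eq hr (mul_comm _ _))
  simp only [commMat, Matrix.sum_apply, castM, kron, eRow, eCol, PM, Matrix.of_apply,
    Matrix.reindex_apply, Matrix.submatrix_apply, Matrix.one_apply, Fin.ext_iff, Fin.coe_divNat,
    Fin.coe_modNat, finCongr_symm, finCongr_apply, Fin.val_cast, Nat.div_one,
    Nat.mod_eq_of_lt hrn]
  rw [Finset.sum_eq_single (⟨c.val / n, hcm⟩ : Fin m)]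
  · simp only [if_true, one_mul]
    have : r.val = c.val % n * m + c.val / n ↔ (r.val / m = c.val % n ∧ r.val % m = c.val / n) := by
      constructor
      · intro h
        rw [h]
        constructor
        · rw [add_comm, Nat.add_mul_div_right _ _ hm, Nat.div_eq_of_lt hcm, zero_add]
        · rw [add_comm, Nat.add_mul_mod_self_right, Nat.mod_eq_of_lt hcm]
      · rintro ⟨h1, h2⟩
        rw [← h1, ← h2, Nat.div_add_mod']
    simp only [this]
    split_ifs <;> simp_all
  · intro s _ hs
    have : c.val / n ≠ s.val := fun h' => hs (Fin.ext h'.symm)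
    simp [this]
  · simp

lemma Cyc_eq (N k : ℕ) (hk : 1 ≤ k) :
    Cyc N k 1 hk = PM _ _ (fun x => (x % N) * N ^ (k - 1) + x / N) := by
  rw [Cyc, commMat_eq, castM_PM, pow_one]

lemma Marg_eq (N k m : ℕ) (hN : 1 ≤ N) (hm : m ≤ k) :
    Marg N k m hm = PM _ _ (fun x => (x / N ^ (k - m) / N) * N ^ (k - m) + x % N ^ (k - m)) := by
  ext r c
  have hp : 0 < N ^ (k - m) := Nat.pow_pos hN
  simp only [Marg, castM, kron, onesRow, PM, Matrix.of_apply,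
    Matrix.reindex_apply, Matrix.submatrix_apply, Matrix.one_apply, Fin.ext_iff, Fin.coe_divNat,
    Fin.coe_modNat, finCongr_symm, finCongr_apply, Fin.val_cast, Nat.div_one, mul_one]
  have hcm := Nat.mod_lt c.val hp
  have : r.val = c.val / (N ^ (k - m)) / N * N ^ (k - m) + c.val % N ^ (k - m) ↔
      (r.val / (N ^ (k - m)) = c.val / (N ^ (k - m)) / N ∧ r.val % N ^ (k - m) = c.val % N ^ (k - m)) := by
    constructor
    · intro h
      rw [h]
      constructor
      · rw [add_comm, Nat.add_mul_div_right _ _ hp, Nat.div_eq_of_lt hcm, zero_add]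
      · rw [add_comm, Nat.add_mul_mod_self_right, Nat.mod_eq_of_lt hcm]
    · rintro ⟨h1, h2⟩
      rw [← h1, ← h2, Nat.div_add_mod']
  simp only [this]
  split_ifs <;> simp_all

lemma key_sum {N : ℕ} (hN : 1 ≤ N) (t c : ℕ) (v : Matrix (Fin N) (Fin 1) ℝ) :
    (∑ x : Fin N, if t = c * N + x.val then v x 0 else 0) =
      if t / N = c then v ⟨t % N, Nat.mod_lt _ hN⟩ 0 else 0 := by
  rw [Finset.sum_eq_single (⟨t % N, Nat.mod_lt _ hN⟩ : Fin N)]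
  · have : t = c * N + t % N ↔ t / N = c := by
      have h0 := Nat.div_add_mod' t N
      constructor
      · intro h
        have : t / N * N = c * N := by omega
        exact Nat.eq_of_mul_eq_mul_right hN this
      · intro h; rw [← h]; exact h0.symm
    simp only [← this]
  · intro s _ hs
    rw [if_neg]
    intro h
    apply hs
    ext
    simp [h, Nat.mod_eq_of_lt s.isLt]
  · simp

lemma Branch_eq (N k : ℕ) (hN : 1 ≤ N) (q : Fin (N ^ k) → Matrix (Fin N) (Fin 1) ℝ) :
    Branch N k k le_rfl q = TM _ _ N (fun x y => x * N + y) q := by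
  ext t c
  simp only [TM, Matrix.of_apply]
  rw [key_sum hN]
  have h1 : N ^ (k - k) = 1 := by simp
  have hz : ∀ y : Fin (N ^ (k - k)), y.val = 0 := fun y => by have := y.isLt; omega
  simp only [Branch, castM, kron, EE, Matrix.of_apply, Matrix.sum_apply,
    Matrix.reindex_apply, Matrix.submatrix_apply, Fin.ext_iff, Fin.coe_divNat,
    Fin.coe_modNat, finCongr_symm, finCongr_apply, Fin.val_cast, Nat.div_one, hz, h1, Nat.mod_one]
  rw [Finset.sum_eq_single c]
  · rw [Finset.sum_eq_single (⟨0, by omega⟩ : Fin (N ^ (k - k)))]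
    · have e : ∀ h : N ^ k * N ^ (k - k) = N ^ k,
          Fin.cast h (pairIdx c (⟨0, by omega⟩ : Fin (N ^ (k - k)))) = c := by
        intro h; ext; simp [pairIdx]
      rw [e]
      simp only [and_self, and_true, if_true, mul_one]
      by_cases h : t.val / N = c.val
      · simp only [h, if_true, one_mul]
        congr 1
        · ext; simp [Fin.coe_modNat, Fin.coe_divNat]
        · exact Subsingleton.elim _ _
      · simp [h]
    · intro y _ hy
      exact absurd (Fin.ext (hz y)) hy
    · simp
  · intro s _ hs
    have : c.val ≠ s.val := fun h' => hs (Fin.ext h'.symm)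
    simp [this]
  · simp

lemma inner_eq (N k : ℕ) (hN : 1 ≤ N) (hk : 1 ≤ k) (h1 h2 : N ^ (k - 1) * N = N ^ k)
    (q : Fin (N ^ k) → Matrix (Fin N) (Fin 1) ℝ) :
    (∑ i : Fin (N ^ (k - 1)), castM h1 h2
        (kron (EE (N ^ (k - 1)) i) (Qblk N k hk q i))) =
      TM _ _ N (fun x y => (x / N) * N + y) q := by
  ext t c
  simp only [TM, Matrix.of_apply]
  rw [key_sum hN]
  have hc : c.val / N < N ^ (k - 1) := Nat.div_lt_of_lt_mul (lt_of_lt_of_eq c.isLt (by rw [mul_comm, h1]))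
  simp only [castM, kron, EE, Qblk, Matrix.of_apply, Matrix.sum_apply,
    Matrix.reindex_apply, Matrix.submatrix_apply, Fin.ext_iff, Fin.coe_divNat,
    finCongr_symm, finCongr_apply, Fin.val_cast]
  rw [Finset.sum_eq_single (⟨c.val / N, hc⟩ : Fin (N ^ (k - 1)))]
  · simp only [and_true]
    have e : Fin.cast h2 (pairIdx (⟨c.val / N, hc⟩ : Fin (N ^ (k - 1)))
        (Fin.cast h2.symm c).modNat) = c := by
      ext; simp [pairIdx, Fin.coe_modNat, Nat.div_add_mod]
    rw [e]
    by_cases h : t.val / N = c.val / N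
    · simp only [h, if_true, one_mul]
      congr 1
    · simp [h]
  · intro s _ hs
    have : c.val / N ≠ s.val := fun h' => hs (Fin.ext h'.symm)
    simp [this]
  · simp

lemma Trans_eq (N k : ℕ) (hN : 1 ≤ N) (hk : 1 ≤ k)
    (q : Fin (N ^ k) → Matrix (Fin N) (Fin 1) ℝ) :
    TransMat N k hk q = TM _ _ N (fun x y => y * N ^ (k - 1) + x / N) q := by
  rw [TransMat, inner_eq N k hN hk, commMat_eq, castM_PM, PM_mul_TM]
  · refine TM_congr _ _ _ fun x y hx hy => ?_
    rw [add_comm (x / N * N), Nat.add_mul_mod_self_right, Nat.mod_eq_of_lt hy,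
      Nat.add_mul_div_right _ _ hN, Nat.div_eq_of_lt hy, zero_add]
  · intro x y hx hy
    have hkk : N ^ (k - 1) * N = N ^ k := by
      rw [← pow_succ]; exact congrArg (N ^ ·) (by omega)
    have hc : x / N < N ^ (k - 1) := Nat.div_lt_of_lt_mul (by rw [mul_comm, hkk]; exact hx)
    rw [← hkk]
    nlinarith

/-- Proposition: transition matrix as the shift operator.
`Q^(k) = M^k_k C^{k+1}_1 B^k_k(𝒬)` and `Q^(k) = C^k_1 M^k_{k-1} B^k_k(𝒬)`. -/
theorem stmt0 (N k : ℕ) (hN : 1 ≤ N) (hk : 1 ≤ k)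
    (q : Fin (N ^ k) → Matrix (Fin N) (Fin 1) ℝ) (hq : ∀ i, IsSimplex (q i)) :
    TransMat N k hk q =
      Marg N k k le_rfl * Cyc N (k + 1) 1 (by omega) * Branch N k k le_rfl q ∧
    TransMat N k hk q =
      Cyc N k 1 hk * Marg N k (k - 1) (by omega) * Branch N k k le_rfl q := by
  have hkk : N ^ (k - 1) * N = N ^ k := by
    rw [← pow_succ]; exact congrArg (N ^ ·) (by omega)
  have hB : ∀ x y, x < N ^ k → y < N → x * N + y < N ^ (k + 1) := by
    intro x y hx hy
    rw [pow_succ]; nlinarith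
  rw [Trans_eq N k hN hk, Branch_eq N k hN, Marg_eq N k k hN, Marg_eq N k (k - 1) hN,
    Cyc_eq, Cyc_eq, Matrix.mul_assoc, Matrix.mul_assoc, PM_mul_TM _ _ _ hB, PM_mul_TM _ _ _ hB,
    PM_mul_TM, PM_mul_TM]
  · constructor
    · refine TM_congr _ _ _ fun x y hx hy => ?_
      rw [add_comm (x * N), Nat.add_mul_mod_self_right, Nat.mod_eq_of_lt hy,
        Nat.add_mul_div_right _ _ hN, Nat.div_eq_of_lt hy, zero_add]
      simp only [Nat.sub_self, pow_zero, Nat.div_one, mul_one, Nat.mod_one, add_zero,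
        Nat.add_sub_cancel]
      rw [← hkk, ← mul_assoc, add_comm _ x, Nat.add_mul_div_right _ _ hN, add_comm]
    · refine TM_congr _ _ _ fun x y hx hy => ?_
      have : k - (k - 1) = 1 := by omega
      rw [this, pow_one, add_comm (x * N), Nat.add_mul_mod_self_right, Nat.mod_eq_of_lt hy,
        Nat.add_mul_div_right _ _ hN, Nat.div_eq_of_lt hy, zero_add, add_comm (x / N * N),
        Nat.add_mul_mod_self_right, Nat.mod_eq_of_lt hy,
        Nat.add_mul_div_right _ _ hN, Nat.div_eq_of_lt hy, zero_add]
  · intro x y hx hy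
    have : k - (k - 1) = 1 := by omega
    have hc : x / N < N ^ (k - 1) := Nat.div_lt_of_lt_mul (by rw [mul_comm, hkk]; exact hx)
    rw [this, pow_one, add_comm (x * N), Nat.add_mul_mod_self_right, Nat.mod_eq_of_lt hy,
        Nat.add_mul_div_right _ _ hN, Nat.div_eq_of_lt hy, zero_add, ← hkk]
    nlinarith
  · intro x y hx hy
    rw [add_comm (x * N), Nat.add_mul_mod_self_right, Nat.mod_eq_of_lt hy,
        Nat.add_mul_div_right _ _ hN, Nat.div_eq_of_lt hy, zero_add, Nat.add_sub_cancel, pow_succ]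
    nlinarith
end
end

section
/- Let N ≥ 1 and k ≥ 1, and let 𝒬 = (q_1, …, q_{N^k}) be a tuple of vectors in Δ_N with associated matrices Q_i and k-th order transition matrix Q^(k). Then M^k_{k-1} B^k_k(𝒬) = Σ_{i=1}^{N^{k-1}} E_{N^{k-1},i} ⊗ Q_i, and this matrix equals C_{N,N^{k-1}}^{-1} Q^(k). -/
open Matrix BigOperators Filter Topology

noncomputable section

theorem aux_commMat_apply (n m : ℕ) (p r : Fin (n * m)) :
    commMat n m p r = if p.val / m = r.val % n ∧ p.val % m = r.val / n then (1 : ℝ) else 0 := by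
  have hr : r.val / n < m := Nat.div_lt_of_lt_mul r.isLt
  have hpn : p.val / m % n = p.val / m :=
    Nat.mod_eq_of_lt (Nat.div_lt_of_lt_mul (lt_of_lt_of_eq p.isLt (Nat.mul_comm n m)))
  unfold commMat
  rw [Matrix.sum_apply]
  rw [Finset.sum_eq_single (⟨r.val / n, hr⟩ : Fin m)]
  · simp [castM, kron, eRow, eCol, Matrix.one_apply, Fin.ext_iff, Fin.divNat, Fin.modNat]
    split_ifs <;> simp_all
  · intro i _ hi
    have : ¬ (r.val / n = i.val) := fun h => hi (Fin.ext h.symm)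
    simp [castM, kron, eRow, eCol, Matrix.one_apply, Fin.ext_iff, Fin.divNat, Fin.modNat, this]
  · simp

theorem aux_commMat_unit (n m : ℕ) : IsUnit (commMat n m) := by
  have h : commMat n m * (commMat n m)ᵀ = 1 := by
    ext p p'
    have hm : 0 < m := by
      rcases Nat.eq_zero_or_pos m with h | h
      · subst h; exact absurd p.isLt (by simp)
      · exact h
    have hp : p.val / m < n := Nat.div_lt_of_lt_mul (lt_of_lt_of_eq p.isLt (Nat.mul_comm n m))
    have hpm : p.val % m < m := Nat.mod_lt _ hm
    have hn : 0 < n := lt_of_le_of_lt (Nat.zero_le _) hp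
    have hb : n * (p.val % m) + p.val / m < n * m := by
      have := Nat.mul_le_mul (le_refl n) (Nat.succ_le_of_lt hpm)
      rw [Nat.mul_succ] at this
      omega
    rw [Matrix.mul_apply, Finset.sum_eq_single (⟨n * (p.val % m) + p.val / m, hb⟩ : Fin (n * m))]
    · simp only [Matrix.transpose_apply, aux_commMat_apply, Matrix.one_apply]
      have e1 : (n * (p.val % m) + p.val / m) % n = p.val / m := by
        rw [Nat.mul_add_mod, Nat.mod_eq_of_lt hp]
      have e2 : (n * (p.val % m) + p.val / m) / n = p.val % m := by
        rw [Nat.mul_add_div hn, Nat.div_eq_of_lt hp, add_zero]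
      rw [e1, e2]
      by_cases h : p = p'
      · subst h; simp
      · have : ¬ (p'.val / m = p.val / m ∧ p'.val % m = p.val % m) := by
          rintro ⟨a, b⟩
          apply h
          apply Fin.ext
          rw [← Nat.div_add_mod p.val m, ← Nat.div_add_mod p'.val m, a, b]
        simp [h, this]
    · intro r _ hr
      simp only [Matrix.transpose_apply, aux_commMat_apply]
      have : ¬ (p.val / m = r.val % n ∧ p.val % m = r.val / n) := by
        rintro ⟨a, b⟩
        apply hr
        apply Fin.ext
        simp only [a, b]
        exact (Nat.div_add_mod _ _).symm
      simp [this]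
    · simp
  exact IsUnit.of_mul_eq_one _ h

theorem aux_castM_unit {a b : ℕ} (h h' : a = b) (A : Matrix (Fin a) (Fin a) ℝ) (hA : IsUnit A) :
    IsUnit (castM h h' A) := by
  subst h
  simpa [castM] using hA

theorem aux_Marg_apply (N k : ℕ) (h : k + 1 - 1 ≤ k + 1) (p : Fin (N ^ (k + 1)))
    (s : Fin (N ^ (k + 1 + 1))) :
    Marg N (k + 1) (k + 1 - 1) h p s =
      if p.val / N = s.val / N / N ∧ p.val % N = s.val % N then (1 : ℝ) else 0 := by
  simp [Marg, castM, kron, onesRow, Matrix.one_apply, Fin.ext_iff, Fin.divNat, Fin.modNat]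
  split_ifs <;> simp_all

theorem aux_Branch_apply (N k : ℕ) (hN : 1 ≤ N) (q : Fin (N ^ k) → Matrix (Fin N) (Fin 1) ℝ)
    (s : Fin (N ^ (k + 1))) (x : Fin (N ^ k)) :
    Branch N k k le_rfl q s x =
      if s.val / N = x.val then q x ⟨s.val % N, Nat.mod_lt _ hN⟩ 0 else 0 := by
  have h1 : N ^ (k - k) = 1 := by simp
  unfold Branch castM
  simp only [Matrix.reindex_apply, Matrix.submatrix_apply, Matrix.sum_apply]
  rw [Finset.sum_eq_single x]
  · rw [Finset.sum_eq_single (⟨0, by rw [h1]; exact one_pos⟩ : Fin (N ^ (k - k)))]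
    · simp [kron, EE, Fin.ext_iff, Fin.divNat, Fin.modNat, pairIdx, Nat.mod_one]
    · intro j _ hj
      exact absurd (Fin.ext (by have := j.isLt; simp only [h1] at this; simp; omega)) hj
    · simp
  · intro i _ hi
    have : ¬ (x.val = i.val) := fun h => hi (Fin.ext h.symm)
    apply Finset.sum_eq_zero
    intro j _
    simp [kron, EE, Fin.ext_iff, Fin.divNat, Fin.modNat, this]
  · simp

theorem aux_first (N k : ℕ) (hN : 1 ≤ N) (hk : 1 ≤ k)
    (q : Fin (N ^ k) → Matrix (Fin N) (Fin 1) ℝ) (h0 : k - 1 ≤ k)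
    (h1 h2 : N ^ (k - 1) * N = N ^ k) :
    Marg N k (k - 1) h0 * Branch N k k le_rfl q =
      (∑ i : Fin (N ^ (k - 1)),
        castM h1 h2 (kron (EE (N ^ (k - 1)) i) (Qblk N k hk q i))) := by
  obtain ⟨k, rfl⟩ : ∃ l, k = l + 1 := ⟨k - 1, by omega⟩
  ext p x
  have hN' : 0 < N := hN
  have hc : p.val % N < N := Nat.mod_lt _ hN
  have hb : N * x.val + p.val % N < N ^ (k + 1 + 1) := by
    have := Nat.mul_le_mul (le_refl N) (Nat.succ_le_of_lt x.isLt)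
    rw [Nat.mul_succ, ← pow_succ'] at this
    omega
  have hx : x.val / N < N ^ (k + 1 - 1) := by
    apply Nat.div_lt_of_lt_mul
    rw [← pow_succ']; exact x.isLt
  have e1 : (N * x.val + p.val % N) % N = p.val % N := by
    rw [Nat.mul_add_mod, Nat.mod_eq_of_lt hc]
  have e2 : (N * x.val + p.val % N) / N = x.val := by
    rw [Nat.mul_add_div hN', Nat.div_eq_of_lt hc, add_zero]
  have L : (Marg N (k+1) (k + 1 - 1) h0 * Branch N (k+1) (k+1) le_rfl q) p x =
      if p.val / N = x.val / N then q x ⟨p.val % N, hc⟩ 0 else 0 := by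
    rw [Matrix.mul_apply, Finset.sum_eq_single
      (⟨N * x.val + p.val % N, hb⟩ : Fin (N ^ (k + 1 + 1)))]
    · rw [aux_Marg_apply, aux_Branch_apply _ _ hN]
      simp [e1, e2]
    · intro s _ hs
      rw [aux_Marg_apply, aux_Branch_apply _ _ hN]
      by_cases h1 : s.val / N = x.val
      · have : ¬ (p.val % N = s.val % N) := by
          intro h2
          apply hs
          apply Fin.ext
          simp only [h2, ← h1]
          exact (Nat.div_add_mod _ _).symm
        simp [this]
      · simp [h1]
    · simp
  rw [L, Matrix.sum_apply, Finset.sum_eq_single (⟨x.val / N, hx⟩ : Fin (N ^ (k + 1 - 1)))]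
  · have hq : ∀ (y : Fin (N ^ (k + 1))), y = x → q y = q x := by rintro y rfl; rfl
    simp only [castM, kron, EE, Qblk, Matrix.reindex_apply, Matrix.submatrix_apply, Matrix.of_apply]
    simp [Fin.ext_iff, Fin.divNat, Fin.modNat]
    rw [hq (Fin.cast _ _) (Fin.ext (by simp [pairIdx, Nat.div_add_mod]))]
  · intro i _ hi
    have : ¬ (x.val / N = i.val) := fun h => hi (Fin.ext h.symm)
    simp [castM, kron, EE, Fin.ext_iff, Fin.divNat, Fin.modNat, this]
  · simp

/-- `M^k_{k-1} B^k_k(𝒬) = ∑_i E_{N^{k-1},i} ⊗ Q_i = C_{N,N^{k-1}}⁻¹ Q^(k)`. -/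
theorem stmt1 (N k : ℕ) (hN : 1 ≤ N) (hk : 1 ≤ k)
    (q : Fin (N ^ k) → Matrix (Fin N) (Fin 1) ℝ) (hq : ∀ i, IsSimplex (q i)) :
    Marg N k (k - 1) (by omega) * Branch N k k le_rfl q =
      (∑ i : Fin (N ^ (k - 1)),
        castM (by rw [← pow_succ]; exact congrArg (N ^ ·) (by omega))
          (by rw [← pow_succ]; exact congrArg (N ^ ·) (by omega))
          (kron (EE (N ^ (k - 1)) i) (Qblk N k hk q i))) ∧
    (∑ i : Fin (N ^ (k - 1)),
        castM (by rw [← pow_succ]; exact congrArg (N ^ ·) (by omega))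
          (by rw [← pow_succ]; exact congrArg (N ^ ·) (by omega))
          (kron (EE (N ^ (k - 1)) i) (Qblk N k hk q i))) =
      (castM (by rw [← pow_succ']; exact congrArg (N ^ ·) (by omega))
          (by rw [← pow_succ']; exact congrArg (N ^ ·) (by omega))
          (commMat N (N ^ (k - 1))))⁻¹ * TransMat N k hk q := by
  refine ⟨aux_first N k hN hk q _ _ _, ?_⟩
  unfold TransMat
  rw [Matrix.nonsing_inv_mul_cancel_left]
  exact (Matrix.isUnit_iff_isUnit_det _).1 (aux_castM_unit _ _ _ (aux_commMat_unit _ _))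
end
end

section
/- Let N ≥ 1 and k ≥ 1, and let Q be a column-stochastic N^k × N^k real matrix. Then Q_{r,c} = 0 for every pair of indices (r,c) with ((r-1) mod N^{k-1}) + 1 ≠ ⌈c/N⌉ if and only if there exist column-stochastic N×N matrices Q_1, …, Q_{N^{k-1}} such that Q = C_{N,N^{k-1}} Σ_{i=1}^{N^{k-1}} E_{N^{k-1},i} ⊗ Q_i. (This is the block decomposition of an arbitrary k-th order Markov transition matrix.) -/
open Matrix BigOperators Filter Topology

noncomputable section

lemma commMat_apply_aux (n m : ℕ) (r c : Fin (n * m)) :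
    commMat n m r c =
      if (c.val / n = r.val % m ∧ c.val % n = r.val / m) then (1 : ℝ) else 0 := by
  have hm : 0 < m := Nat.pos_of_mul_pos_left (lt_of_le_of_lt (Nat.zero_le _) r.isLt)
  unfold commMat
  rw [Matrix.sum_apply]
  rw [Finset.sum_eq_single (⟨r.val % m, Nat.mod_lt _ hm⟩ : Fin m)]
  · simp only [castM, kron, eRow, eCol, Matrix.reindex_apply, Matrix.submatrix_apply,
      Matrix.of_apply, Matrix.one_apply, Fin.ext_iff, Fin.coe_divNat, Fin.coe_modNat,
      finCongr_symm, finCongr_apply, Fin.val_cast, Nat.div_one]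
    have h : r.val / m < n := Nat.div_lt_of_lt_mul (lt_of_lt_of_eq r.isLt (mul_comm n m))
    simp only [Nat.mod_eq_of_lt h, eq_comm (a := r.val / m)]
    by_cases h1 : c.val / n = r.val % m <;> by_cases h2 : c.val % n = r.val / m <;>
      simp [h1, h2]
  · intro b _ hb
    have : ¬ (r.val % m = b.val) := fun h => hb (Fin.ext h.symm)
    simp [castM, kron, eRow, eCol, Fin.ext_iff, this]
  · simp

lemma entry_aux (N m K : ℕ) (h1 h2 : N * m = K) (h3 h4 : m * N = K)
    (Qi : Fin m → Matrix (Fin N) (Fin N) ℝ) (i : Fin m) (a : Fin N) (r c : Fin K) (b : Fin N)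
    (j : Fin m) (hr : r.val = m * a.val + i.val) (hc : c.val = N * j.val + b.val) :
    (castM h1 h2 (commMat N m) * ∑ i, castM h3 h4 (kron (EE m i) (Qi i))) r c
      = if i = j then Qi i a b else 0 := by
  subst h1
  have hi := i.isLt
  have ha := a.isLt
  have hj := j.isLt
  have hb := b.isLt
  have hm : 0 < m := by omega
  have hN : 0 < N := by omega
  have e1 : r.val % m = i.val := by rw [hr, Nat.mul_add_mod, Nat.mod_eq_of_lt hi]
  have e2 : r.val / m = a.val := by
    rw [hr, Nat.mul_add_div hm, Nat.div_eq_of_lt hi, add_zero]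
  have e3 : c.val % N = b.val := by rw [hc, Nat.mul_add_mod, Nat.mod_eq_of_lt hb]
  have e4 : c.val / N = j.val := by
    rw [hc, Nat.mul_add_div hN, Nat.div_eq_of_lt hb, add_zero]
  have f3 : (N * i.val + a.val) % N = a.val := by rw [Nat.mul_add_mod, Nat.mod_eq_of_lt ha]
  have f4 : (N * i.val + a.val) / N = i.val := by
    rw [Nat.mul_add_div hN, Nat.div_eq_of_lt ha, add_zero]
  rw [Matrix.mul_apply]
  rw [Finset.sum_eq_single (finCongr h3 (pairIdx i a))]
  · have : castM rfl h2 (commMat N m) r (finCongr h3 (pairIdx i a)) = 1 := by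
      simp [castM, commMat_apply_aux, pairIdx, e1, e2, f3, f4]
    rw [this, one_mul, Matrix.sum_apply]
    have g1 : (finCongr h3.symm (finCongr h3 (pairIdx i a))).divNat = i := by
      ext; simp [pairIdx, f4]
    have g2 : (finCongr h3.symm (finCongr h3 (pairIdx i a))).modNat = a := by
      ext; simp [pairIdx, f3]
    have g3 : (finCongr h4.symm c).divNat = j := by ext; simp [e4]
    have g4 : (finCongr h4.symm c).modNat = b := by ext; simp [e3]
    simp only [castM, kron, EE, Matrix.reindex_apply, Matrix.submatrix_apply,
      Matrix.of_apply, finCongr_symm, g1, g2, g3, g4]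
    rw [Finset.sum_eq_single i]
    · simp [eq_comm]
    · intro x _ hx
      simp [hx.symm]
    · simp
  · intro s _ hs
    have : castM rfl h2 (commMat N m) r s = 0 := by
      simp only [castM, commMat_apply_aux, Matrix.reindex_apply, Matrix.submatrix_apply,
        finCongr_symm, finCongr_apply, Fin.val_cast, e1, e2]
      rw [if_neg]
      rintro ⟨x, y⟩
      apply hs
      ext
      have := Nat.div_add_mod s.val N
      rw [x, y] at this
      simp [pairIdx, this]
    rw [this, zero_mul]
  · simp

lemma main_aux (N m K : ℕ) (h1 h2 : N * m = K) (h3 h4 : m * N = K) (hN : 0 < N)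
    (Q : Matrix (Fin K) (Fin K) ℝ) (hQ : IsColStochastic Q) :
    (∀ r c : Fin K, r.val % m + 1 ≠ (c.val + N) / N → Q r c = 0) ↔
    ∃ Qi : Fin m → Matrix (Fin N) (Fin N) ℝ,
      (∀ i, IsColStochastic (Qi i)) ∧
      Q = castM h1 h2 (commMat N m) * ∑ i, castM h3 h4 (kron (EE m i) (Qi i)) := by
  have decR : ∀ r : Fin K, ∃ (a : Fin N) (i : Fin m), r.val = m * a.val + i.val := by
    intro r
    have hr : r.val < m * N := by rw [h3]; exact r.isLt
    have hm : 0 < m := Nat.pos_of_mul_pos_right (lt_of_le_of_lt (Nat.zero_le _) hr)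
    exact ⟨⟨r.val / m, Nat.div_lt_of_lt_mul hr⟩, ⟨r.val % m, Nat.mod_lt _ hm⟩,
      (Nat.div_add_mod _ _).symm⟩
  have decC : ∀ c : Fin K, ∃ (j : Fin m) (b : Fin N), c.val = N * j.val + b.val := by
    intro r
    have hr : r.val < N * m := by rw [h1]; exact r.isLt
    exact ⟨⟨r.val / N, Nat.div_lt_of_lt_mul hr⟩, ⟨r.val % N, Nat.mod_lt _ hN⟩,
      (Nat.div_add_mod _ _).symm⟩
  have key : ∀ (r c : Fin K) (a : Fin N) (i : Fin m) (j : Fin m) (b : Fin N),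
      r.val = m * a.val + i.val → c.val = N * j.val + b.val →
      (r.val % m + 1 ≠ (c.val + N) / N ↔ i ≠ j) := by
    intro r c a i j b hr hc
    rw [hr, hc, Nat.mul_add_mod, Nat.mod_eq_of_lt i.isLt, Nat.add_div_right _ hN,
      Nat.mul_add_div hN, Nat.div_eq_of_lt b.isLt]
    simp [Fin.ext_iff]
  constructor
  · intro h
    refine ⟨fun i => Matrix.of fun a b =>
      Q (finCongr h1 (pairIdx a i)) (finCongr h3 (pairIdx i b)), ?_, ?_⟩
    · intro i b
      refine ⟨fun a => (hQ _).1 _, ?_⟩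
      rw [← (hQ (finCongr h3 (pairIdx i b))).2]
      rw [← Equiv.sum_comp (finProdFinEquiv.trans (finCongr h1)), Fintype.sum_prod_type]
      refine Finset.sum_congr rfl fun a _ => ?_
      rw [Finset.sum_eq_single i]
      · simp only [Matrix.of_apply]
        congr 1
        ext
        simp [pairIdx, add_comm]
      · intro x _ hx
        apply h
        rw [key _ _ a x i b (by simp [add_comm]) (by simp [pairIdx])]
        exact hx
      · simp
    · ext r c
      obtain ⟨a, i, hr⟩ := decR r
      obtain ⟨j, b, hc⟩ := decC c
      rw [entry_aux N m K h1 h2 h3 h4 _ i a r c b j hr hc]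
      split_ifs with hij
      · subst hij
        simp only [Matrix.of_apply]
        congr 1 <;> ext <;> simp [pairIdx, hr, hc]
      · exact h r c ((key r c a i j b hr hc).2 hij)
  · rintro ⟨Qi, -, rfl⟩ r c hrc
    obtain ⟨a, i, hr⟩ := decR r
    obtain ⟨j, b, hc⟩ := decC c
    rw [entry_aux N m K h1 h2 h3 h4 _ i a r c b j hr hc,
      if_neg ((key r c a i j b hr hc).1 hrc)]

/-- a column-stochastic `N^k × N^k` matrix `Q` has
`Q_{r,c} = 0` whenever `((r-1) mod N^{k-1}) + 1 ≠ ⌈c/N⌉` (1-based indices; here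
expressed 0-based, with `⌈(c+1)/N⌉ = (c + N)/N`) iff it decomposes as
`Q = C_{N,N^{k-1}} ∑_i E_{N^{k-1},i} ⊗ Q_i` with column-stochastic `Q_i`. -/
theorem stmt3 (N k : ℕ) (hN : 1 ≤ N) (hk : 1 ≤ k)
    (Q : Matrix (Fin (N ^ k)) (Fin (N ^ k)) ℝ) (hQ : IsColStochastic Q) :
    (∀ r c : Fin (N ^ k), r.val % N ^ (k - 1) + 1 ≠ (c.val + N) / N → Q r c = 0) ↔
    ∃ Qi : Fin (N ^ (k - 1)) → Matrix (Fin N) (Fin N) ℝ,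
      (∀ i, IsColStochastic (Qi i)) ∧
      Q = castM (by rw [← pow_succ']; exact congrArg (N ^ ·) (by omega))
            (by rw [← pow_succ']; exact congrArg (N ^ ·) (by omega))
            (commMat N (N ^ (k - 1))) *
          ∑ i : Fin (N ^ (k - 1)),
            castM (by rw [← pow_succ]; exact congrArg (N ^ ·) (by omega))
              (by rw [← pow_succ]; exact congrArg (N ^ ·) (by omega))
              (kron (EE (N ^ (k - 1)) i) (Qi i)) := by
  exact main_aux N (N ^ (k - 1)) (N ^ k) _ _ _ _ hN Q hQ
end
end

section
/- Let N ≥ 1 and k ≥ 1. For all integers n with 0 ≤ n ≤ k and all integers m ≥ 0, one has (C^k_n)^m = C^k_r, where r := (n·m) mod k (note C^k_0 = C_{1,N^k} and C^k_k = C_{N^k,1} both equal the identity). -/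
open Matrix BigOperators Filter Topology

noncomputable section

theorem commMat_apply (n m : ℕ) (r c : Fin (n * m)) :
    commMat n m r c = if (c : ℕ) = (r % m) * n + r / m then (1 : ℝ) else 0 := by
  have hr := r.isLt
  have hm : 0 < m := by
    rcases Nat.eq_zero_or_pos m with h | h
    · subst h; simp at hr
    · exact h
  have hn : 0 < n := by
    rcases Nat.eq_zero_or_pos n with h | h
    · subst h; simp at hr
    · exact h
  have hq : (r : ℕ) / m < n := Nat.div_lt_of_lt_mul (lt_of_lt_of_eq hr (mul_comm n m))
  have key : ((c : ℕ) = (r % m) * n + r / m) ↔ ((c : ℕ) / n = r % m ∧ (c : ℕ) % n = r / m) := by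
    rw [Nat.div_mod_unique hn]
    constructor
    · intro h; exact ⟨by rw [h]; ring, hq⟩
    · intro h; rw [← h.1]; ring
  have hc : (c : ℕ) / n < m := Nat.div_lt_of_lt_mul c.isLt
  rw [commMat, Matrix.sum_apply, Finset.sum_eq_single (⟨(c : ℕ) / n, hc⟩ : Fin m)]
  · have e1 : (r : ℕ) / m % n = r / m := Nat.mod_eq_of_lt hq
    simp only [castM, kron, eRow, eCol, Matrix.reindex_apply, Matrix.submatrix_apply,
      Matrix.of_apply, Matrix.one_apply, Fin.ext_iff, finCongr_symm, finCongr_apply, Fin.val_cast,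
      Fin.coe_divNat, Fin.coe_modNat, Nat.div_one, e1, key]
    by_cases h1 : (r : ℕ) / m = c % n <;> by_cases h2 : (r : ℕ) % m = c / n <;>
      simp [h1, h2, Ne.symm, eq_comm (a := (c : ℕ) / n), eq_comm (a := (c : ℕ) % n)]
  · intro i _ hi
    have : ¬ ((c : ℕ) / n = i) := fun h => hi (Fin.ext h.symm)
    simp [castM, kron, eRow, eCol, Fin.ext_iff, this]
  · simp

def cycN (N k a r : ℕ) : ℕ := (r % N ^ (k - a)) * N ^ a + r / N ^ (k - a)

theorem cycN_lt (N k a r : ℕ) (hN : 1 ≤ N) (ha : a ≤ k) (hr : r < N ^ k) :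
    cycN N k a r < N ^ k := by
  have e : N ^ k = N ^ (k - a) * N ^ a := by rw [← pow_add]; congr 1; omega
  have h1 : r % N ^ (k - a) < N ^ (k - a) := Nat.mod_lt _ (by positivity)
  have h2 : r / N ^ (k - a) < N ^ a := Nat.div_lt_of_lt_mul (by rw [← e]; exact hr)
  rw [cycN, e]
  calc _ < (r % N ^ (k - a)) * N ^ a + N ^ a := Nat.add_lt_add_left h2 _
    _ = (r % N ^ (k - a) + 1) * N ^ a := by ring
    _ ≤ _ := Nat.mul_le_mul_right _ h1

theorem cycN_zero (N k a r : ℕ) (hN : 1 ≤ N) : cycN N k a r = 0 ↔ r = 0 := by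
  have hp : N ^ a ≠ 0 := by positivity
  constructor
  · intro h
    simp only [cycN, Nat.add_eq_zero_iff, mul_eq_zero, hp, or_false] at h
    rw [← Nat.div_add_mod r (N ^ (k - a)), h.1, h.2]; simp
  · rintro rfl; simp [cycN]

theorem pow_modEq (N k : ℕ) (hN : 1 ≤ N) : N ^ k ≡ 1 [MOD (N ^ k - 1)] := by
  have h : 1 ≤ N ^ k := Nat.one_le_pow _ _ hN
  exact ((Nat.modEq_iff_dvd' h).2 dvd_rfl).symm

theorem cycN_modEq (N k a r : ℕ) (hN : 1 ≤ N) (ha : a ≤ k) :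
    cycN N k a r ≡ r * N ^ a [MOD (N ^ k - 1)] := by
  have e : N ^ k = N ^ (k - a) * N ^ a := by rw [← pow_add]; congr 1; omega
  have h : r * N ^ a = (r % N ^ (k - a)) * N ^ a + r / N ^ (k - a) * N ^ k := by
    conv_lhs => rw [← Nat.div_add_mod r (N ^ (k - a))]
    rw [e]; ring
  rw [h, cycN]
  refine Nat.ModEq.add_left _ ?_
  simpa using ((pow_modEq N k hN).symm.mul_left (r / N ^ (k - a)))

theorem uniq_modEq (M x y : ℕ) (hx : x ≤ M) (hy : y ≤ M) (h : x ≡ y [MOD M])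
    (h0 : x = 0 ↔ y = 0) : x = y := by
  rcases hx.lt_or_eq with hx | hx <;> rcases hy.lt_or_eq with hy | hy
  · exact Nat.ModEq.eq_of_lt_of_lt h hx hy
  · subst hy
    simp only [Nat.ModEq, Nat.mod_self, Nat.mod_eq_of_lt hx] at h
    omega
  · subst hx
    simp only [Nat.ModEq, Nat.mod_self, Nat.mod_eq_of_lt hy] at h
    omega
  · omega

def cycF (N k a : ℕ) (hN : 1 ≤ N) (ha : a ≤ k) (r : Fin (N ^ k)) : Fin (N ^ k) :=
  ⟨cycN N k a r, cycN_lt N k a r hN ha r.isLt⟩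

theorem Cyc_apply (N k a : ℕ) (hN : 1 ≤ N) (ha : a ≤ k) (r c : Fin (N ^ k)) :
    Cyc N k a ha r c = if c = cycF N k a hN ha r then (1 : ℝ) else 0 := by
  simp only [Cyc, castM, Matrix.reindex_apply, Matrix.submatrix_apply, commMat_apply,
    finCongr_symm, finCongr_apply, Fin.val_cast, Fin.ext_iff, cycF, cycN]

theorem Cyc_pow_apply (N k a : ℕ) (hN : 1 ≤ N) (ha : a ≤ k) (m : ℕ) (r c : Fin (N ^ k)) :
    (Cyc N k a ha ^ m) r c = if c = (cycF N k a hN ha)^[m] r then (1 : ℝ) else 0 := by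
  induction m generalizing r with
  | zero =>
    by_cases h : c = r
    · simp [h]
    · simp [h, Ne.symm h]
  | succ m ih =>
    rw [pow_succ', Matrix.mul_apply]
    rw [Finset.sum_eq_single (cycF N k a hN ha r)]
    · rw [Cyc_apply N k a hN ha, ih, if_pos rfl, one_mul, Function.iterate_succ_apply]
    · intro b _ hb
      rw [Cyc_apply N k a hN ha, if_neg hb, zero_mul]
    · simp

theorem iter_spec (N k a : ℕ) (hN : 1 ≤ N) (ha : a ≤ k) (m : ℕ) (r : Fin (N ^ k)) :
    (((cycF N k a hN ha)^[m] r : Fin (N ^ k)) : ℕ) ≡ r * N ^ (a * m) [MOD (N ^ k - 1)] ∧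
    ((((cycF N k a hN ha)^[m] r : Fin (N ^ k)) : ℕ) = 0 ↔ (r : ℕ) = 0) := by
  induction m with
  | zero => exact ⟨by simpa using Nat.ModEq.refl _, by simp⟩
  | succ m ih =>
    rw [Function.iterate_succ_apply']
    refine ⟨(cycN_modEq N k a _ hN ha).trans ?_, (cycN_zero N k a _ hN).trans ih.2⟩
    have := ih.1.mul_right (N ^ a)
    rwa [mul_assoc, ← pow_add] at this

/-- `(C^k_n)^m = C^k_{(n·m) mod k}`. -/
theorem stmt6 (N k : ℕ) (hN : 1 ≤ N) (hk : 1 ≤ k) (n : ℕ) (hn : n ≤ k) (m : ℕ) :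
    Cyc N k n hn ^ m = Cyc N k (n * m % k) (le_of_lt (Nat.mod_lt _ hk)) := by
  ext r c
  have hlt := Nat.mod_lt (n * m) hk
  rw [Cyc_pow_apply N k n hN hn, Cyc_apply N k _ hN]
  have : (cycF N k n hN hn)^[m] r = cycF N k (n * m % k) hN (le_of_lt hlt) r := by
    obtain ⟨h1, h2⟩ := iter_spec N k n hN hn m r
    have h3 := cycN_modEq N k (n * m % k) r hN (le_of_lt hlt)
    have h4 := cycN_zero N k (n * m % k) r hN
    refine Fin.ext (uniq_modEq (N ^ k - 1) _ _ (Nat.le_sub_one_of_lt (Fin.isLt _))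
      (Nat.le_sub_one_of_lt (Fin.isLt _)) ?_ (h2.trans h4.symm))
    refine h1.trans (Nat.ModEq.trans ?_ h3.symm)
    refine Nat.ModEq.mul_left _ ?_
    conv_lhs => rw [← Nat.div_add_mod (n * m) k, pow_add, pow_mul]
    simpa using ((pow_modEq N k hN).pow (n * m / k)).mul_right (N ^ (n * m % k))
  rw [this]
end
end

section
/- Let N ≥ 1 and 1 ≤ m ≤ k, and for each j with m ≤ j ≤ k let 𝒬^(j) = (q^(j)_1, …, q^(j)_{N^j}) be a tuple of vectors in Δ_N. Define N×N matrices recursively: Q̄^(k+1)_i := E_N for 1 ≤ i ≤ N^k, and for m ≤ l ≤ k and 1 ≤ i ≤ N^{l-1}, let Q̄^(l)_i be the N×N matrix whose j-th column (1 ≤ j ≤ N) is the vector Q̄^(l+1)_{N(i-1)+j} q^(l)_{N(i-1)+j}. Then the k-shift matrix satisfies S(𝒬^(m), …, 𝒬^(k)) = C^m_1 Σ_{i=1}^{N^{m-1}} E_{N^{m-1},i} ⊗ Q̄^(m)_i. -/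
open Matrix BigOperators Filter Topology

noncomputable section

theorem aux_divNat {a b : ℕ} (i : Fin a) (j : Fin b) : (pairIdx i j).divNat = i := by
  have hb : 0 < b := j.pos
  ext
  simp [pairIdx, Fin.divNat, Nat.mul_add_div hb, Nat.div_eq_of_lt j.isLt]

theorem aux_modNat {a b : ℕ} (i : Fin a) (j : Fin b) : (pairIdx i j).modNat = j := by
  ext
  simp [pairIdx, Fin.modNat, Nat.mul_add_mod, Nat.mod_eq_of_lt j.isLt]

theorem aux_pair {a b : ℕ} (x : Fin (a * b)) : ∃ i : Fin a, ∃ j : Fin b, x = pairIdx i j :=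
  ⟨x.divNat, x.modNat, by ext; simp [pairIdx, Nat.div_add_mod]⟩

theorem aux_sum {a b : ℕ} (f : Fin (a * b) → ℝ) :
    ∑ x, f x = ∑ i : Fin a, ∑ j : Fin b, f (pairIdx i j) := by
  rw [← Fintype.sum_prod_type']
  symm
  refine Fintype.sum_bijective (fun p : Fin a × Fin b => pairIdx p.1 p.2) ⟨?_, ?_⟩ _ _ (fun _ => rfl)
  · rintro ⟨i, j⟩ ⟨i', j'⟩ h
    have h1 := congrArg Fin.divNat h
    have h2 := congrArg Fin.modNat h
    simp only [aux_divNat, aux_modNat] at h1 h2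
    rw [h1, h2]
  · intro x
    obtain ⟨i, j, rfl⟩ := aux_pair x
    exact ⟨(i, j), rfl⟩

theorem aux_castM {a b a' b' : ℕ} (ha : a = a') (hb : b = b') (A : Matrix (Fin a) (Fin b) ℝ)
    (i : Fin a') (j : Fin b') : castM ha hb A i j = A (Fin.cast ha.symm i) (Fin.cast hb.symm j) := by
  subst ha hb; rfl

def pI {N k : ℕ} (i : Fin (N ^ k)) (j : Fin N) : Fin (N ^ (k + 1)) := pairIdx i j

theorem pI_val {N k : ℕ} (i : Fin (N ^ k)) (j : Fin N) : (pI i j).val = N * i.val + j.val := rfl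

theorem pI_div {N k : ℕ} (i : Fin (N ^ k)) (j : Fin N) : (pI i j).val / N = i.val := by
  rw [pI_val, Nat.mul_add_div j.pos, Nat.div_eq_of_lt j.isLt, add_zero]

theorem pI_mod {N k : ℕ} (i : Fin (N ^ k)) (j : Fin N) : (pI i j).val % N = j.val := by
  rw [pI_val, Nat.mul_add_mod, Nat.mod_eq_of_lt j.isLt]

theorem pI_inj {N k : ℕ} (i i' : Fin (N ^ k)) (j j' : Fin N) :
    pI i j = pI i' j' ↔ i = i' ∧ j = j' := by
  constructor
  · intro h
    exact ⟨Fin.ext (by rw [← pI_div i j, ← pI_div i' j', h]),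
      Fin.ext (by rw [← pI_mod i j, ← pI_mod i' j', h])⟩
  · rintro ⟨rfl, rfl⟩; rfl

theorem pI_surj {N k : ℕ} (x : Fin (N ^ (k + 1))) : ∃ i : Fin (N ^ k), ∃ j : Fin N, x = pI i j :=
  aux_pair (a := N ^ k) (b := N) x

theorem pI_sum {N k : ℕ} (f : Fin (N ^ (k + 1)) → ℝ) :
    ∑ x, f x = ∑ i : Fin (N ^ k), ∑ j : Fin N, f (pI i j) :=
  aux_sum (a := N ^ k) (b := N) f

theorem aux_Marg (N k : ℕ) (r i : Fin (N ^ k)) (j : Fin N) :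
    Marg N k k le_rfl r (pI i j) = if r = i then 1 else 0 := by
  have h0 : N ^ (k - k) = 1 := by simp
  unfold Marg
  rw [aux_castM]
  simp only [kron, Matrix.of_apply, onesRow, Matrix.one_apply, mul_one]
  have hsub : ∀ x y : Fin (N ^ (k - k)), x = y := fun x y => by
    have := x.isLt; have := y.isLt; ext; omega
  rw [if_pos (hsub _ _), mul_one]
  refine if_congr ?_ rfl rfl
  rw [Fin.ext_iff, Fin.ext_iff]
  simp [Fin.divNat, pI_div]

theorem aux_Branch (N k : ℕ) (q : Fin (N ^ k) → Matrix (Fin N) (Fin 1) ℝ)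
    (i s : Fin (N ^ k)) (a : Fin N) :
    Branch N k k le_rfl q (pI i a) s = if i = s then q s a 0 else 0 := by
  have h0 : N ^ (k - k) = 1 := by simp
  have hsub : ∀ x y : Fin (N ^ (k - k)), x = y := fun x y => by
    have := x.isLt; have := y.isLt; ext; omega
  unfold Branch
  rw [aux_castM]
  simp only [Matrix.sum_apply, kron, Matrix.of_apply, EE]
  let z : Fin (N ^ (k - k)) := ⟨0, by omega⟩
  have hu : (Finset.univ : Finset (Fin (N ^ (k - k)))) = {z} := by
    ext x; simp [hsub x z]
  have hz : ∀ (x y : Fin (N ^ (k - k))), (x = y) = True := fun x y => by simp [hsub x y]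
  simp only [hu, Finset.sum_singleton, hz, and_self, if_true, mul_one]
  have hd : ∀ h : N ^ (k + 1) = N ^ k * N * N ^ (k - k),
      (Fin.cast h (pI i a)).divNat.divNat = i := fun h => by
    ext; simp [Fin.divNat, pI_div]
  have hm : ∀ h : N ^ (k + 1) = N ^ k * N * N ^ (k - k),
      (Fin.cast h (pI i a)).divNat.modNat = a := fun h => by
    ext; simp [Fin.divNat, Fin.modNat, pI_mod]
  have hs : ∀ h : N ^ k = N ^ k * 1 * N ^ (k - k),
      (Fin.cast h s).divNat.divNat = s := fun h => by
    ext; simp [Fin.divNat]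
  have hs' : ∀ h : N ^ k = N ^ k * 1 * N ^ (k - k),
      (Fin.cast h s).divNat.modNat = 0 := fun h => Subsingleton.elim _ _
  rw [Finset.sum_eq_single s]
  · have e1 : (finCongr (by rw [← pow_add]; exact congrArg (N ^ ·) (by omega)) (pairIdx s z) :
        Fin (N ^ k)) = s := by ext; simp [pairIdx, z]
    rw [e1, hd, hm, hs, hs']
    simp
  · intro x _ hx
    rw [hs, if_neg (fun h => hx h.2.symm), zero_mul]
  · simp

theorem aux_Cyc (N k : ℕ) (r : Fin (N ^ (k + 1))) (i : Fin (N ^ k)) (a : Fin N) :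
    Cyc N (k + 1) 1 (by omega) r (pI i a) =
      if r.val = a.val * N ^ k + i.val then 1 else 0 := by
  unfold Cyc commMat
  rw [aux_castM]
  simp only [Matrix.sum_apply, aux_castM, kron, Matrix.of_apply, eRow, eCol, Matrix.one_apply]
  rw [Finset.sum_eq_single (Fin.cast (by simp) i)]
  · simp only [Fin.ext_iff, Fin.val_cast, Fin.coe_divNat, Fin.coe_modNat]
    simp only [pow_one, Nat.div_one, pI_div, pI_mod, Nat.add_sub_cancel, if_true, one_mul]
    have hr : r.val / N ^ k < N := by
      apply Nat.div_lt_of_lt_mul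
      rw [← pow_succ]
      exact r.isLt
    rw [Nat.mod_eq_of_lt hr, ite_zero_mul_ite_zero, mul_one]
    refine if_congr ⟨?_, ?_⟩ rfl rfl
    · rintro ⟨h1, h2⟩
      rw [← h1, ← h2, mul_comm, Nat.div_add_mod]
    · intro h
      rw [h, mul_comm, Nat.mul_add_div i.pos, Nat.mul_add_mod, Nat.div_eq_of_lt i.isLt,
        Nat.mod_eq_of_lt i.isLt]
      simp
  · intro x _ hx
    rw [if_neg, zero_mul, zero_mul]
    intro h
    apply hx
    rw [← h]
    ext
    simp [Fin.divNat, pI_div]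
  · simp

def auxD (N t : ℕ) (P : Fin (N ^ t) → Matrix (Fin N) (Fin N) ℝ) :
    Matrix (Fin (N ^ (t + 1))) (Fin (N ^ (t + 1))) ℝ :=
  ∑ i : Fin (N ^ t), castM (by rw [pow_succ]) (by rw [pow_succ]) (kron (EE (N ^ t) i) (P i))

theorem aux_D (N t : ℕ) (P : Fin (N ^ t) → Matrix (Fin N) (Fin N) ℝ) (i j : Fin (N ^ t))
    (a b : Fin N) :
    auxD N t P (pI i a) (pI j b) = if i = j then P i a b else 0 := by
  unfold auxD
  simp only [Matrix.sum_apply, aux_castM, kron, Matrix.of_apply, EE]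
  have h1 : ∀ i (a : Fin N), (Fin.cast (pow_succ N t) (pI i a)).divNat = i := aux_divNat
  have h2 : ∀ (i : Fin (N ^ t)) (a : Fin N), (Fin.cast (pow_succ N t) (pI i a)).modNat = a :=
    aux_modNat
  simp only [h1, h2]
  rw [Finset.sum_eq_single i]
  · simp [eq_comm]
  · intro x _ hx
    simp [hx.symm]
  · simp

theorem aux_D_one (N t : ℕ) : auxD N t (fun _ => 1) = 1 := by
  ext x y
  obtain ⟨i, a, rfl⟩ := pI_surj x
  obtain ⟨j, b, rfl⟩ := pI_surj y
  rw [aux_D, Matrix.one_apply, Matrix.one_apply]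
  simp only [pI_inj, ite_and]

theorem aux_MC (N t : ℕ) (r : Fin (N ^ (t + 1))) (i1 : Fin (N ^ t)) (i2 a : Fin N) :
    (Marg N (t + 1) (t + 1) le_rfl * Cyc N (t + 1 + 1) 1 (by omega)) r
      (pI (pI i1 i2) a) =
      if r.val = a.val * N ^ t + i1.val then 1 else 0 := by
  rw [Matrix.mul_apply]
  rw [pI_sum]
  rw [Finset.sum_eq_single r]
  · rw [Finset.sum_eq_single i2]
    · rw [aux_Marg, if_pos rfl, one_mul]
      rw [aux_Cyc]
      have : N * r.val + i2.val = a.val * N ^ (t + 1) + (N * i1.val + i2.val) ↔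
          r.val = a.val * N ^ t + i1.val := by
        have : a.val * N ^ (t + 1) + (N * i1.val + i2.val) =
          N * (a.val * N ^ t + i1.val) + i2.val := by ring
        rw [this, Nat.add_right_cancel_iff, Nat.mul_right_inj a.pos.ne']
      simp only [pI_val, this]
    · intro v _ hv
      rw [aux_Cyc]
      rw [if_neg, mul_zero]
      simp only [pI_val]
      intro h
      apply hv
      have e : a.val * N ^ (t + 1) + (N * i1.val + i2.val) =
          N * (a.val * N ^ t + i1.val) + i2.val := by ring
      rw [e] at h
      have := congrArg (· % N) h
      simpa [Nat.mul_add_mod, Nat.mod_eq_of_lt, Fin.ext_iff] using this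
    · simp
  · intro u _ hu
    apply Finset.sum_eq_zero
    intro v _
    rw [aux_Marg, if_neg hu.symm, zero_mul]
  · simp

theorem aux_DB (N k : ℕ) (P : Fin (N ^ k) → Matrix (Fin N) (Fin N) ℝ)
    (q : Fin (N ^ k) → Matrix (Fin N) (Fin 1) ℝ) (i s : Fin (N ^ k)) (a : Fin N) :
    (auxD N k P * Branch N k k le_rfl q) (pI i a) s =
      if i = s then (P s * q s) a 0 else 0 := by
  rw [Matrix.mul_apply]
  rw [pI_sum]
  simp only [aux_D, aux_Branch]
  rw [Finset.sum_eq_single i]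
  · by_cases h : i = s
    · subst h; simp [Matrix.mul_apply]
    · simp [h]
  · intro u _ hu
    simp [hu.symm]
  · simp

theorem aux_step (N t : ℕ) (P : Fin (N ^ (t + 1)) → Matrix (Fin N) (Fin N) ℝ)
    (q : Fin (N ^ (t + 1)) → Matrix (Fin N) (Fin 1) ℝ)
    (P' : Fin (N ^ t) → Matrix (Fin N) (Fin N) ℝ)
    (h : ∀ (i : Fin (N ^ t)) (j r : Fin N), P' i r j = (P (pI i j) * q (pI i j)) r 0) :
    Marg N (t + 1) (t + 1) le_rfl * Cyc N (t + 1 + 1) 1 (by omega) *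
      (auxD N (t + 1) P * Branch N (t + 1) (t + 1) le_rfl q) =
    Cyc N (t + 1) 1 (by omega) * auxD N t P' := by
  ext r s
  obtain ⟨s1, s2, rfl⟩ := pI_surj s
  trans ∑ a : Fin N, (if r.val = a.val * N ^ t + s1.val then 1 else 0) * P' s1 a s2
  · rw [Matrix.mul_apply]
    rw [pI_sum]
    rw [Finset.sum_eq_single (pI s1 s2)]
    · refine Finset.sum_congr rfl fun a _ => ?_
      rw [aux_MC, aux_DB, if_pos rfl, h]
    · intro u _ hu
      apply Finset.sum_eq_zero
      intro v _
      rw [aux_DB, if_neg hu, mul_zero]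
    · intro h; exact absurd (Finset.mem_univ _) h
  · rw [Matrix.mul_apply]
    symm
    rw [pI_sum]
    rw [Finset.sum_eq_single s1]
    · refine Finset.sum_congr rfl fun a _ => ?_
      rw [aux_Cyc, aux_D, if_pos rfl]
    · intro u _ hu
      apply Finset.sum_eq_zero
      intro v _
      rw [aux_D, if_neg hu, mul_zero]
    · simp

theorem aux_main (N t : ℕ) (Q : (j : ℕ) → Fin (N ^ j) → Matrix (Fin N) (Fin 1) ℝ)
    (Qbar : (t : ℕ) → Fin (N ^ t) → Matrix (Fin N) (Fin N) ℝ) : ∀ (n : ℕ)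
    (_ : ∀ u, t + 1 ≤ u + 1 → u + 1 ≤ t + 1 + n → ∀ (i : Fin (N ^ u)) (j r : Fin N),
      Qbar u i r j = (Qbar (u + 1) (pairIdx i j) * Q (u + 1) (pairIdx i j)) r 0),
    MChain N (t + 1) n * Cyc N (t + 1 + n + 1) 1 (by omega) *
      (auxD N (t + 1 + n) (Qbar (t + 1 + n)) * BChain N Q (t + 1) n) =
    Cyc N (t + 1) 1 (by omega) * auxD N t (Qbar t)
  | 0, hrec => aux_step N t _ _ _ (hrec t (by omega) (by omega))
  | n + 1, hrec => by
    rw [← aux_main N t Q Qbar n (fun u h1 h2 => hrec u h1 (by omega))]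
    have := aux_step N (t + 1 + n) (Qbar (t + 1 + n + 1)) (Q (t + 1 + n + 1)) (Qbar (t + 1 + n))
      (hrec (t + 1 + n) (by omega) (by omega))
    calc _ = MChain N (t + 1) n * (Marg N (t + 1 + n + 1) (t + 1 + n + 1) le_rfl *
          Cyc N (t + 1 + n + 1 + 1) 1 (by omega) * (auxD N (t + 1 + n + 1) (Qbar (t + 1 + n + 1)) *
          Branch N (t + 1 + n + 1) (t + 1 + n + 1) le_rfl (Q (t + 1 + n + 1)))) *
          BChain N Q (t + 1) n := by
            simp only [Matrix.mul_assoc, MChain, BChain]; rfl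
      _ = _ := by rw [this]; simp only [Matrix.mul_assoc]

/-- recursive form of the k-shift matrix. With `Qbar t` playing the
role of `Q̄^(t+1)` (so `Q̄^(k+1) = E_N` and for `m ≤ l ≤ k` the `j`-th column of
`Q̄^(l)_i` is `Q̄^(l+1)_{N(i-1)+j} q^(l)_{N(i-1)+j}`), we have
`S(𝒬^(m), …, 𝒬^(k)) = C^m_1 ∑_i E_{N^{m-1},i} ⊗ Q̄^(m)_i`. -/
theorem stmt7 (N m k : ℕ) (hN : 1 ≤ N) (hm : 1 ≤ m) (hmk : m ≤ k)
    (Q : (j : ℕ) → Fin (N ^ j) → Matrix (Fin N) (Fin 1) ℝ)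
    (hQ : ∀ j, m ≤ j → j ≤ k → ∀ i, IsSimplex (Q j i))
    (Qbar : (t : ℕ) → Fin (N ^ t) → Matrix (Fin N) (Fin N) ℝ)
    (hbase : ∀ i : Fin (N ^ k), Qbar k i = 1)
    (hrec : ∀ t, m ≤ t + 1 → t + 1 ≤ k → ∀ (i : Fin (N ^ t)) (j r : Fin N),
      Qbar t i r j = (Qbar (t + 1) (pairIdx i j) * Q (t + 1) (pairIdx i j)) r 0) :
    Shift N m (k - m) Q =
      Cyc N m 1 hm *
        ∑ i : Fin (N ^ (m - 1)),
          castM (by rw [← pow_succ]; exact congrArg (N ^ ·) (by omega))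
            (by rw [← pow_succ]; exact congrArg (N ^ ·) (by omega))
            (kron (EE (N ^ (m - 1)) i) (Qbar (m - 1) i)) := by
  obtain ⟨t, rfl⟩ : ∃ t, m = t + 1 := ⟨m - 1, by omega⟩
  obtain ⟨n, rfl⟩ := Nat.exists_eq_add_of_le hmk
  rw [Nat.add_sub_cancel_left]
  have h := aux_main N t Q Qbar n hrec
  have hb : Qbar (t + 1 + n) = fun _ => 1 := funext hbase
  rw [hb, aux_D_one, Matrix.one_mul] at h
  exact h
end
end

section
/- Let N ≥ 1 and k ≥ 1. For every θ ∈ Δ_{N^k} there exist tuples Θ^(m) = (θ^(m)_1, …, θ^(m)_{N^m}) of vectors in Δ_N, for m = 0, 1, …, k-1, such that θ = B^{k-1}_{k-1}(Θ^(k-1)) B^{k-2}_{k-2}(Θ^(k-2)) ⋯ B^0_0(Θ^(0)), where the product on the right is an N^k × 1 matrix identified with a vector in ℝ^{N^k}. -/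
open Matrix BigOperators Filter Topology

noncomputable section

theorem Branch_apply (N k : ℕ) (q : Fin (N ^ k) → Matrix (Fin N) (Fin 1) ℝ)
    (r : Fin (N ^ (k + 1))) (c : Fin (N ^ k)) (s : Fin N) (hs : s.val = r.val % N) :
    Branch N k k le_rfl q r c = if r.val / N = c.val then q c s 0 else 0 := by
  have h1 : N ^ (k - k) = 1 := by simp
  have hpos : 0 < N := s.pos
  have : Subsingleton (Fin (N ^ (k - k))) := by rw [h1]; infer_instance
  let z : Fin (N ^ (k - k)) := ⟨0, by rw [h1]; exact Nat.one_pos⟩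
  unfold Branch castM
  rw [Matrix.reindex_apply, Matrix.submatrix_apply, Matrix.sum_apply]
  simp only [Matrix.sum_apply]
  have hterm : ∀ (i : Fin (N ^ k)), (∑ j : Fin (N ^ (k - k)), kron (kron (EE (N ^ k) i)
          (q (finCongr (by rw [← pow_add]; exact congrArg (N ^ ·) (by omega)) (pairIdx i j))))
        (EE (N ^ (k - k)) j)
        ((finCongr (by rw [← pow_succ, ← pow_add]; exact congrArg (N ^ ·) (by omega))).symm r)
        ((finCongr (by rw [mul_one, ← pow_add]; exact congrArg (N ^ ·) (by omega))).symm c))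
      = if c = i then (if r.val / N = c.val then q c s 0 else 0) else 0 := by
    intro i
    rw [Fintype.sum_eq_single z (fun x hx => absurd (Subsingleton.elim _ _) hx)]
    have hi : (finCongr (by rw [← pow_add]; exact congrArg (N ^ ·) (by omega)) (pairIdx i z) : Fin (N ^ k)) = i := by
      apply Fin.ext; simp [pairIdx, z, h1]
    rw [hi]
    simp only [kron, EE, Matrix.of_apply]
    have hz : ∀ x y : Fin (N ^ (k - k)), (if x = z ∧ y = z then (1 : ℝ) else 0) = 1 :=
      fun x y => if_pos ⟨Subsingleton.elim _ _, Subsingleton.elim _ _⟩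
    have hmo : ∀ x : ℝ, x * 1 = x := mul_one
    rw [hz, hmo]
    have hq : ∀ (s' : Fin N) (t : Fin 1), s'.val = r.val % N → q i s' t = q i s 0 := by
      intro s' t h
      rw [Subsingleton.elim t 0, show s' = s from Fin.ext (h.trans hs.symm)]
    rw [hq _ _ (by simp [Fin.modNat, Fin.divNat, h1])]
    simp only [Fin.ext_iff, Fin.divNat, finCongr_symm, finCongr_apply, Fin.val_cast, h1, Nat.div_one]
    by_cases h : c = i
    · subst h; simp
    · have : ¬ (c.val = i.val) := fun h' => h (Fin.ext h')
      simp [this]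
  refine (Finset.sum_congr rfl fun i _ => hterm i).trans ?_
  simp

theorem Branch_factor (N k : ℕ) (hN : 1 ≤ N) (f : Fin (N ^ (k + 1)) → ℝ) (hf : ∀ i, 0 ≤ f i) :
    ∃ (q : Fin (N ^ k) → Matrix (Fin N) (Fin 1) ℝ) (g : Fin (N ^ k) → ℝ),
      (∀ i, IsSimplex (q i)) ∧ (∀ i, 0 ≤ g i) ∧ ∑ i, g i = ∑ i, f i ∧
      ∀ r, ∑ c, Branch N k k le_rfl q r c * g c = f r := by
  let e : Fin (N ^ k) × Fin N ≃ Fin (N ^ (k + 1)) :=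
    finProdFinEquiv.trans (finCongr (pow_succ N k).symm)
  let g : Fin (N ^ k) → ℝ := fun c => ∑ s, f (e (c, s))
  have hg : ∀ c, 0 ≤ g c := fun c => Finset.sum_nonneg fun s _ => hf _
  have hN' : (N : ℝ) ≠ 0 := by positivity
  refine ⟨fun c => Matrix.of fun s _ => if g c = 0 then 1 / (N : ℝ) else f (e (c, s)) / g c, g,
    ?_, hg, ?_, ?_⟩
  · intro c
    constructor
    · intro s
      simp only [Matrix.of_apply]
      split_ifs
      · positivity
      · exact div_nonneg (hf _) (hg _)
    · simp only [Matrix.of_apply]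
      by_cases h : g c = 0
      · simp [h, hN']
      · simp only [h, if_false]
        rw [← Finset.sum_div]
        exact div_self h
  · rw [← e.sum_comp, Fintype.sum_prod_type]
  · intro r
    obtain ⟨⟨a, s⟩, rfl⟩ := e.surjective r
    have hv : (e (a, s)).val = s.val + N * a.val := by simp [e]
    have hd : (e (a, s)).val / N = a.val := by
      rw [hv, Nat.add_mul_div_left _ _ hN, Nat.div_eq_of_lt s.isLt, zero_add]
    have hm : s.val = (e (a, s)).val % N := by
      rw [hv, Nat.add_mul_mod_self_left, Nat.mod_eq_of_lt s.isLt]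
    simp only [Branch_apply N k _ _ _ s hm, hd, Matrix.of_apply]
    rw [Fintype.sum_eq_single a]
    · by_cases h : g a = 0
      · have := (Finset.sum_eq_zero_iff_of_nonneg (fun s _ => hf (e (a, s)))).1 h s (Finset.mem_univ _)
        simp [h, this]
      · simp [h]
    · intro x hx
      rw [if_neg (fun h => hx (Fin.ext h.symm)), zero_mul]

theorem BChain_congr (N : ℕ) (Q Q' : (j : ℕ) → Fin (N ^ j) → Matrix (Fin N) (Fin 1) ℝ) (m n : ℕ)
    (h : ∀ j, j ≤ m + n → Q j = Q' j) : BChain N Q m n = BChain N Q' m n := by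
  induction n with
  | zero => simp only [BChain]; rw [h m (by omega)]
  | succ n ih =>
    simp only [BChain]
    rw [h (m + n + 1) (by omega), ih fun j hj => h j (by omega)]

theorem BChain_exists (N : ℕ) (hN : 1 ≤ N) (n : ℕ) : ∀ (f : Fin (N ^ (0 + n + 1)) → ℝ),
    (∀ i, 0 ≤ f i) → ∑ i, f i = 1 →
    ∃ Θ : (m : ℕ) → Fin (N ^ m) → Matrix (Fin N) (Fin 1) ℝ,
      (∀ m, m ≤ n → ∀ i, IsSimplex (Θ m i)) ∧ ∀ r c, BChain N Θ 0 n r c = f r := by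
  induction n with
  | zero =>
    intro f hf h1
    obtain ⟨q, g, hq, hg, hs, hr⟩ := Branch_factor N 0 hN f hf
    refine ⟨Function.update (fun _ _ => 0) 0 q, ?_, ?_⟩
    · intro m hm i
      obtain rfl : m = 0 := by omega
      simpa using hq i
    · intro r c
      have : Subsingleton (Fin (N ^ 0)) := by rw [pow_zero]; infer_instance
      rw [h1, Fintype.sum_eq_single c (fun x hx => absurd (Subsingleton.elim _ _) hx)] at hs
      have := hr r
      rw [Fintype.sum_eq_single c (fun x hx => absurd (Subsingleton.elim _ _) hx), hs, mul_one] at this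
      simp only [BChain, Function.update_self]
      exact this
  | succ n ih =>
    intro f hf h1
    obtain ⟨q, g, hq, hg, hs, hr⟩ := Branch_factor N (0 + n + 1) hN f hf
    obtain ⟨Θ, hΘ, hB⟩ := ih g hg (hs.trans h1)
    refine ⟨Function.update Θ (0 + n + 1) q, ?_, ?_⟩
    · intro m hm i
      by_cases h : m = 0 + n + 1
      · subst h; simpa using hq i
      · rw [Function.update_of_ne h]
        exact hΘ m (by omega) i
    · intro r c
      simp only [BChain, Function.update_self]
      rw [BChain_congr N (Function.update Θ (0 + n + 1) q) Θ 0 n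
        (fun j hj => Function.update_of_ne (by omega) _ _), Matrix.mul_apply]
      simp only [hB]
      exact hr r

/-- existence of the branching factorization of a simplex vector:
every `θ ∈ Δ_{N^k}` can be written as
`θ = B^{k-1}_{k-1}(Θ^(k-1)) ⋯ B^0_0(Θ^(0))` with tuples `Θ^(m)` of vectors in `Δ_N`. -/
theorem stmt9 (N k : ℕ) (hN : 1 ≤ N) (hk : 1 ≤ k)
    (θ : Matrix (Fin (N ^ k)) (Fin 1) ℝ) (hθ : IsSimplex θ) :
    ∃ Θ : (m : ℕ) → Fin (N ^ m) → Matrix (Fin N) (Fin 1) ℝ,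
      (∀ m, m ≤ k - 1 → ∀ i, IsSimplex (Θ m i)) ∧
      θ = castM (congrArg (N ^ ·) (by omega)) (by norm_num) (BChain N Θ 0 (k - 1)) := by
  obtain ⟨n, rfl⟩ : ∃ n, k = n + 1 := ⟨k - 1, by omega⟩
  let E : Fin (N ^ (0 + (n + 1 - 1) + 1)) ≃ Fin (N ^ (n + 1)) :=
    finCongr (congrArg (N ^ ·) (by omega))
  obtain ⟨Θ, h1, h2⟩ := BChain_exists N hN (n + 1 - 1) (fun i => θ (E i) 0) (fun i => hθ.1 _)
    ((E.sum_comp (fun i => θ i 0)).trans hθ.2)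
  refine ⟨Θ, h1, ?_⟩
  ext i j
  simp only [castM, Matrix.reindex_apply, Matrix.submatrix_apply]
  rw [h2, Subsingleton.elim j 0]
  rfl
end
end

section
/- Let N ≥ 1 and k ≥ 1, and let θ ∈ Δ_{N^k} have all entries strictly positive. Then the tuples Θ^(m) = (θ^(m)_1, …, θ^(m)_{N^m}) of vectors in Δ_N (m = 0, 1, …, k-1) satisfying θ = B^{k-1}_{k-1}(Θ^(k-1)) B^{k-2}_{k-2}(Θ^(k-2)) ⋯ B^0_0(Θ^(0)) are unique: if two families of such tuples both yield θ, they coincide. -/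
open Matrix BigOperators Filter Topology

noncomputable section

theorem aux_entry (a N d A R : ℕ) (hd : d = 1) (hA : a * d = A) (h1 : a * N * d = R)
    (h2 : a * 1 * d = A) (q : Fin A → Matrix (Fin N) (Fin 1) ℝ) (r : Fin R) (c : Fin A)
    (s : Fin N) (i : Fin A) (hr : r.val = N * i.val + s.val) :
    castM h1 h2 (∑ i : Fin a, ∑ j : Fin d,
      kron (kron (EE a i) (q (finCongr hA (pairIdx i j)))) (EE d j)) r c
      = if c = i then q i s 0 else 0 := by
  subst hd
  obtain rfl : A = a := by omega
  subst h1
  have hN : 0 < N := lt_of_le_of_lt (Nat.zero_le _) s.isLt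
  have hdiv : r.val / N = i.val := by
    rw [hr, Nat.mul_add_div hN, Nat.div_eq_of_lt s.isLt, add_zero]
  have hmod : r.val % N = s.val := by
    rw [hr, Nat.mul_add_mod, Nat.mod_eq_of_lt s.isLt]
  have key : ∀ x : Fin A, finCongr hA (pairIdx x (0 : Fin 1)) = x := by
    intro x; apply Fin.ext; simp [pairIdx]
  have e1 : (((finCongr (rfl : A * N * 1 = A * N * 1)).symm r).divNat.divNat) = i := by
    apply Fin.ext; simp [Fin.divNat, hdiv]
  have e2 : (((finCongr (rfl : A * N * 1 = A * N * 1)).symm r).divNat.modNat) = s := by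
    apply Fin.ext; simp [Fin.divNat, Fin.modNat, hmod]
  have e3 : (((finCongr h2).symm c).divNat.divNat) = c := by
    apply Fin.ext; simp [Fin.divNat]
  simp only [castM, Matrix.reindex_apply, Matrix.submatrix_apply, Matrix.sum_apply, kron,
    Matrix.of_apply, e1, e2, e3, Fin.sum_univ_one, key, EE]
  rw [Finset.sum_eq_single i]
  · have : ∀ x y : Fin 1, x = y := fun x y => Subsingleton.elim _ _
    by_cases h : c = i
    · simp only [h, and_self, if_true, one_mul]
      rw [if_pos ⟨this _ _, this _ _⟩, mul_one, this (Fin.modNat _) 0]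
    · simp [h]
  · intro b _ hb
    simp [Ne.symm hb]
  · simp

def rowIdx (N k : ℕ) (i : Fin (N ^ k)) (s : Fin N) : Fin (N ^ (k + 1)) :=
  finCongr (pow_succ N k).symm (pairIdx i s)

theorem branch_mul (N k b : ℕ) (q : Fin (N ^ k) → Matrix (Fin N) (Fin 1) ℝ)
    (v : Matrix (Fin (N ^ k)) (Fin b) ℝ) (i : Fin (N ^ k)) (s : Fin N) (j : Fin b) :
    (Branch N k k le_rfl q * v) (rowIdx N k i s) j = q i s 0 * v i j := by
  rw [Matrix.mul_apply]
  have h : ∀ c, Branch N k k le_rfl q (rowIdx N k i s) c = if c = i then q i s 0 else 0 := by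
    intro c
    exact aux_entry (N ^ k) N (N ^ (k - k)) (N ^ k) _ (by simp) _ _ _ q _ c s i
      (by simp [rowIdx, pairIdx])
  simp [h]

theorem branch_inj (N k b : ℕ) (q q' : Fin (N ^ k) → Matrix (Fin N) (Fin 1) ℝ)
    (v v' : Matrix (Fin (N ^ k)) (Fin b) ℝ) (hq : ∀ i, IsSimplex (q i))
    (hq' : ∀ i, IsSimplex (q' i))
    (h : Branch N k k le_rfl q * v = Branch N k k le_rfl q' * v')
    (hp : ∀ i j, 0 < (Branch N k k le_rfl q * v) i j) :
    v = v' ∧ (∀ i j, 0 < v i j) ∧ (0 < b → q = q') := by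
  have hs : ∀ (q : Fin (N ^ k) → Matrix (Fin N) (Fin 1) ℝ)
      (v : Matrix (Fin (N ^ k)) (Fin b) ℝ), (∀ i, IsSimplex (q i)) → ∀ i j,
      ∑ s, (Branch N k k le_rfl q * v) (rowIdx N k i s) j = v i j := by
    intro q v hq i j
    simp only [branch_mul]
    rw [← Finset.sum_mul, (hq i).2, one_mul]
  have hv : v = v' := by
    ext i j
    rw [← hs q v hq, ← hs q' v' hq', h]
  have hvp : ∀ i j, 0 < v i j := by
    intro i j
    rw [← hs q v hq]
    apply Finset.sum_pos (fun s _ => hp _ _)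
    by_contra hne
    have h0 := (hq i).2
    rw [Finset.not_nonempty_iff_eq_empty.mp hne] at h0
    simp at h0
  refine ⟨hv, hvp, fun hb => ?_⟩
  funext i
  ext s t
  obtain rfl : t = 0 := Subsingleton.elim _ _
  have := congrFun (congrFun h (rowIdx N k i s)) ⟨0, hb⟩
  rw [branch_mul, branch_mul, ← hv] at this
  exact mul_right_cancel₀ (hvp _ _).ne' this

theorem chain_inj (N : ℕ) (Θ Θ' : (m : ℕ) → Fin (N ^ m) → Matrix (Fin N) (Fin 1) ℝ) (n : ℕ)
    (hΘ : ∀ m, m ≤ n → ∀ i, IsSimplex (Θ m i))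
    (hΘ' : ∀ m, m ≤ n → ∀ i, IsSimplex (Θ' m i))
    (h : BChain N Θ 0 n = BChain N Θ' 0 n)
    (hp : ∀ i j, 0 < BChain N Θ 0 n i j) :
    ∀ m, m ≤ n → Θ m = Θ' m := by
  induction n with
  | zero =>
    intro m hm
    obtain rfl : m = 0 := by omega
    simp only [BChain] at h hp
    exact (branch_inj N 0 (N ^ 0) (Θ 0) (Θ' 0) 1 1 (hΘ 0 le_rfl) (hΘ' 0 le_rfl)
      (by rw [Matrix.mul_one, Matrix.mul_one]; exact h)
      (by rw [Matrix.mul_one]; exact hp)).2.2 (by simp)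
  | succ n ih =>
    intro m hm
    simp only [BChain] at h hp
    obtain ⟨a, b, c⟩ := branch_inj N (0 + n + 1) (N ^ 0) _ _ _ _ (hΘ _ (by omega))
      (hΘ' _ (by omega)) h hp
    rcases Nat.lt_or_ge n m with h1 | h1
    · obtain rfl : m = 0 + n + 1 := by omega
      exact c (by simp)
    · exact ih (fun m hm => hΘ m (by omega)) (fun m hm => hΘ' m (by omega)) a b m h1

/-- uniqueness of the branching factorization for strictly positive `θ`. -/
theorem stmt10 (N k : ℕ) (hN : 1 ≤ N) (hk : 1 ≤ k)
    (θ : Matrix (Fin (N ^ k)) (Fin 1) ℝ) (hθ : IsSimplex θ) (hpos : ∀ i, 0 < θ i 0)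
    (Θ Θ' : (m : ℕ) → Fin (N ^ m) → Matrix (Fin N) (Fin 1) ℝ)
    (hΘ : ∀ m, m ≤ k - 1 → ∀ i, IsSimplex (Θ m i))
    (hΘ' : ∀ m, m ≤ k - 1 → ∀ i, IsSimplex (Θ' m i))
    (hfac : θ = castM (congrArg (N ^ ·) (by omega)) (by norm_num) (BChain N Θ 0 (k - 1)))
    (hfac' : θ = castM (congrArg (N ^ ·) (by omega)) (by norm_num) (BChain N Θ' 0 (k - 1))) :
    ∀ m, m ≤ k - 1 → ∀ i, Θ m i = Θ' m i := by
  intro m hm i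
  have h : BChain N Θ 0 (k - 1) = BChain N Θ' 0 (k - 1) :=
    (Matrix.reindex _ _).injective (hfac.symm.trans hfac')
  refine congrFun (chain_inj N Θ Θ' (k - 1) hΘ hΘ' h ?_ m hm) i
  intro a b
  have e : 0 + (k - 1) + 1 = k := by omega
  have := hpos (finCongr (congrArg (N ^ ·) e) a)
  rw [hfac] at this
  simp only [castM, Matrix.reindex_apply, Matrix.submatrix_apply] at this
  convert this using 2
  · simp
  · have : b.val < 1 := lt_of_lt_of_eq b.isLt (pow_zero N)
    apply Fin.ext
    exact Nat.lt_one_iff.mp this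
end
end

section
/- Let N ≥ 1 and k ≥ 2. Let θ ∈ Δ_{N^k} be factored as θ = B^{k-1}_{k-1}(Θ^(k-1)) B^{k-2}_{k-2}(Θ^(k-2)) ⋯ B^0_0(Θ^(0)) with tuples Θ^(m) = (θ^(m)_1, …, θ^(m)_{N^m}) of vectors in Δ_N for m = 0, …, k-1, and let 𝒬 be a tuple of N^k vectors in Δ_N whose associated k-th order transition matrix Q^(k) satisfies θ = Q^(k) θ. Write θ^(0) := θ^(0)_1 ∈ Δ_N (the single vector of Θ^(0)). Then θ^(0) = S(Θ^(1), …, Θ^(m)) θ^(0) for every 1 ≤ m ≤ k-1, and θ^(0) = S(Θ^(1), …, Θ^(k-1), 𝒬) θ^(0). -/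
open Matrix BigOperators Filter Topology

noncomputable section

/-- Entry with natural-number indices (zero outside the range). -/
def ent {a b : ℕ} (A : Matrix (Fin a) (Fin b) ℝ) (r c : ℕ) : ℝ :=
  if h : r < a ∧ c < b then A ⟨r, h.1⟩ ⟨c, h.2⟩ else 0

lemma ent_fin {a b : ℕ} (A : Matrix (Fin a) (Fin b) ℝ) (r : Fin a) (c : Fin b) :
    ent A r c = A r c := by
  simp [ent]

lemma ent_out {a b : ℕ} (A : Matrix (Fin a) (Fin b) ℝ) (r c : ℕ) (h : ¬ (r < a ∧ c < b)) :
    ent A r c = 0 := by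
  simp only [ent, dif_neg h]

lemma ent_cast {a b a' b' : ℕ} (ha : a = a') (hb : b = b') (A : Matrix (Fin a) (Fin b) ℝ)
    (r c : ℕ) : ent (castM ha hb A) r c = ent A r c := by
  subst ha; subst hb; rfl

lemma ent_sum {ι : Type} (s : Finset ι) {a b : ℕ} (A : ι → Matrix (Fin a) (Fin b) ℝ)
    (r c : ℕ) : ent (∑ i ∈ s, A i) r c = ∑ i ∈ s, ent (A i) r c := by
  unfold ent
  split_ifs with h
  · simp [Matrix.sum_apply]
  · simp

lemma ent_mul {a b d : ℕ} (A : Matrix (Fin a) (Fin b) ℝ) (B : Matrix (Fin b) (Fin d) ℝ)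
    (r c : ℕ) : ent (A * B) r c = ∑ j ∈ Finset.range b, ent A r j * ent B j c := by
  by_cases h : r < a ∧ c < d
  · rw [ent, dif_pos h, Matrix.mul_apply, Finset.sum_range]
    refine Finset.sum_congr rfl fun j _ => ?_
    rw [← ent_fin A, ← ent_fin B]
  · rw [ent_out _ _ _ h]
    symm
    refine Finset.sum_eq_zero fun j _ => ?_
    by_cases hr : r < a
    · rw [ent_out B]
      · simp
      · tauto
    · rw [ent_out A]
      · simp
      · tauto

lemma ent_kron {a b c d : ℕ} (A : Matrix (Fin a) (Fin b) ℝ) (B : Matrix (Fin c) (Fin d) ℝ)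
    (r s : ℕ) : ent (kron A B) r s = ent A (r / c) (s / d) * ent B (r % c) (s % d) := by
  by_cases h : r < a * c ∧ s < b * d
  · have hc : 0 < c := Nat.pos_of_ne_zero (by rintro rfl; simp at h)
    have hd : 0 < d := Nat.pos_of_ne_zero (by rintro rfl; simp at h)
    have h1 : r / c < a := (Nat.div_lt_iff_lt_mul hc).2 h.1
    have h2 : s / d < b := (Nat.div_lt_iff_lt_mul hd).2 h.2
    rw [ent, dif_pos h, ent, dif_pos ⟨h1, h2⟩, ent, dif_pos ⟨Nat.mod_lt _ hc, Nat.mod_lt _ hd⟩]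
    rfl
  · rw [ent_out _ _ _ h]
    symm
    by_cases hc : 0 < c
    · by_cases hd : 0 < d
      · rw [ent_out A, zero_mul]
        rw [Nat.div_lt_iff_lt_mul hc, Nat.div_lt_iff_lt_mul hd]
        exact h
      · rw [ent_out B, mul_zero]
        intro h'; have := h'.2; omega
    · rw [ent_out B, mul_zero]
      intro h'; have := h'.1; omega

lemma ent_EE (n : ℕ) (i : Fin n) (r c : ℕ) :
    ent (EE n i) r c = if r = i ∧ c = i then 1 else 0 := by
  have := i.isLt
  unfold ent EE
  split_ifs with h h' h' <;> simp [Fin.ext_iff] <;> omega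

lemma ent_eRow (n : ℕ) (i : Fin n) (r c : ℕ) :
    ent (eRow n i) r c = if r = 0 ∧ c = i then 1 else 0 := by
  have := i.isLt
  unfold ent eRow
  split_ifs with h h' h' <;> simp [Fin.ext_iff] <;> omega

lemma ent_eCol (n : ℕ) (i : Fin n) (r c : ℕ) :
    ent (eCol n i) r c = if r = i ∧ c = 0 then 1 else 0 := by
  have := i.isLt
  unfold ent eCol
  split_ifs with h h' h' <;> simp [Fin.ext_iff] <;> omega

lemma ent_one (n : ℕ) (r c : ℕ) :
    ent (1 : Matrix (Fin n) (Fin n) ℝ) r c = if r = c ∧ r < n then 1 else 0 := by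
  unfold ent
  split_ifs with h h' h' <;> simp [Matrix.one_apply, Fin.ext_iff] <;> omega

lemma ent_onesRow (n : ℕ) (r c : ℕ) :
    ent (onesRow n) r c = if r = 0 ∧ c < n then 1 else 0 := by
  unfold ent onesRow
  split_ifs with h h' h' <;> simp <;> omega

/-- Tuple of vectors with natural-number indices. -/
def qx {N L : ℕ} (q : Fin L → Matrix (Fin N) (Fin 1) ℝ) (x y : ℕ) : ℝ :=
  if h : x < L then ent (q ⟨x, h⟩) y 0 else 0

lemma qx_fin {N L : ℕ} (q : Fin L → Matrix (Fin N) (Fin 1) ℝ) (x : Fin L) (y : ℕ) :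
    ent (q x) y 0 = qx q x y := by
  simp [qx]

lemma ent_Branch (N k : ℕ) (q : Fin (N ^ k) → Matrix (Fin N) (Fin 1) ℝ) (r c : ℕ) :
    ent (Branch N k k le_rfl q) r c = if r / N = c then qx q c (r % N) else 0 := by
  unfold Branch
  rw [ent_cast]
  simp only [ent_sum, ent_kron, ent_EE, Nat.mod_one, qx_fin]
  have h1 : N ^ (k - k) = 1 := by simp
  have key : ∀ i : Fin (N ^ k), ∀ j : Fin (N ^ (k - k)),
      (finCongr (by rw [← pow_add]; exact congrArg (N ^ ·) (by omega)) (pairIdx i j) :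
        Fin (N ^ k)).val = (i : ℕ) ∧ (j : ℕ) = 0 := by
    intro i j
    have hj := j.isLt
    have : (j : ℕ) = 0 := by omega
    simp [pairIdx, this]
  have key2 : ∀ i : Fin (N ^ k), ∀ j : Fin (N ^ (k - k)), (j : ℕ) = 0 := fun i j => (key i j).2
  simp only [fun i j => (key i j).1]
  simp only [h1, Nat.div_one, Nat.mod_one]
  have e : ∀ i : Fin (N ^ k), (∑ j : Fin (N ^ (k - k)),
      (if r / N = (i : ℕ) ∧ c = (i : ℕ) then (1 : ℝ) else 0) * qx q i (r % N) *
        (if 0 = (j : ℕ) ∧ 0 = (j : ℕ) then 1 else 0)) =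
      (if r / N = (i : ℕ) ∧ c = (i : ℕ) then (1 : ℝ) else 0) * qx q i (r % N) := by
    intro i
    rw [Fin.sum_univ_eq_sum_range (fun j => (if r / N = (i : ℕ) ∧ c = (i : ℕ) then (1 : ℝ) else 0) * qx q i (r % N) *
        (if 0 = j ∧ 0 = j then 1 else 0)) (N ^ (k - k)), h1]
    simp
  simp only [e]
  rw [Fin.sum_univ_eq_sum_range (fun i => (if r / N = i ∧ c = i then (1 : ℝ) else 0) * qx q i (r % N)) (N ^ k)]
  by_cases hc : c < N ^ k
  · rw [Finset.sum_eq_single c]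
    · simp
    · intro b _ hb
      rw [if_neg (by omega), zero_mul]
    · simp [hc]
  · rw [qx, dif_neg hc, ite_self]
    refine Finset.sum_eq_zero fun i hi => ?_
    rw [Finset.mem_range] at hi
    rw [if_neg (by omega), zero_mul]

lemma ent_Marg (N k : ℕ) (hN : 1 ≤ N) (r c : ℕ) :
    ent (Marg N k k le_rfl) r c = if r = c / N ∧ r < N ^ k then 1 else 0 := by
  unfold Marg
  rw [ent_cast]
  have h1 : N ^ (k - k) = 1 := by simp
  simp only [ent_kron, ent_one, ent_onesRow, h1, Nat.div_one, Nat.mod_one]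
  simp [Nat.mod_lt c hN]

lemma ent_comm (n m a i c : ℕ) (ha : a < n) (hi : i < m) :
    ent (commMat n m) (a * m + i) c = if c = i * n + a then 1 else 0 := by
  unfold commMat
  simp only [ent_sum, ent_cast, ent_kron, ent_eRow, ent_eCol, ent_one, Nat.div_one, Nat.mod_one]
  have e1 : (a * m + i) / m = a := by
    rw [mul_comm, Nat.mul_add_div (by omega), Nat.div_eq_of_lt hi, add_zero]
  have e2 : (a * m + i) % m = i := by
    rw [mul_comm, Nat.mul_add_mod, Nat.mod_eq_of_lt hi]
  rw [e1, e2, Nat.div_eq_of_lt ha, Nat.mod_eq_of_lt ha]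
  have hc : c = i * n + a ↔ c / n = i ∧ a = c % n := by
    constructor
    · rintro rfl
      rw [mul_comm, Nat.mul_add_div (by omega), Nat.div_eq_of_lt ha, Nat.mul_add_mod,
        Nat.mod_eq_of_lt ha]
      simp
    · rintro ⟨rfl, h⟩
      conv_lhs => rw [← Nat.div_add_mod c n]
      rw [h, mul_comm]
  rw [Finset.sum_eq_single (⟨i, hi⟩ : Fin m)]
  · simp only [hc, ha]
    by_cases h1 : c / n = i <;> by_cases h2 : a = c % n <;> simp [h1, h2]
  · intro b _ hb
    have : i ≠ (b : ℕ) := fun h => hb (Fin.ext h.symm)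
    simp [this]
  · simp

lemma sum_range_mul' (f : ℕ → ℝ) (A B : ℕ) :
    ∑ x ∈ Finset.range (A * B), f x =
      ∑ i ∈ Finset.range A, ∑ j ∈ Finset.range B, f (i * B + j) := by
  induction A with
  | zero => simp
  | succ A ih => rw [Nat.succ_mul, Finset.sum_range_add, ih, Finset.sum_range_succ]

lemma sum_range_eq_mul (f : ℕ → ℝ) {L A B : ℕ} (h : L = A * B) :
    ∑ x ∈ Finset.range L, f x =
      ∑ i ∈ Finset.range A, ∑ j ∈ Finset.range B, f (i * B + j) := by
  rw [h, sum_range_mul']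

lemma idx_lt {a i A B : ℕ} (ha : a < A) (hi : i < B) : a * B + i < A * B := by
  have : (a + 1) * B ≤ A * B := Nat.mul_le_mul_right _ ha
  have : (a + 1) * B = a * B + B := by ring
  omega

lemma ent_Branch_mul (N k : ℕ) (q : Fin (N ^ k) → Matrix (Fin N) (Fin 1) ℝ) {d : ℕ}
    (v : Matrix (Fin (N ^ k)) (Fin d) ℝ) (r s : ℕ) :
    ent (Branch N k k le_rfl q * v) r s = qx q (r / N) (r % N) * ent v (r / N) s := by
  rw [ent_mul]
  simp only [ent_Branch]
  by_cases h : r / N < N ^ k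
  · rw [Finset.sum_eq_single (r / N)]
    · simp
    · intro b _ hb
      rw [if_neg (Ne.symm hb), zero_mul]
    · simp [h]
  · rw [qx, dif_neg h, zero_mul]
    refine Finset.sum_eq_zero fun i hi => ?_
    rw [Finset.mem_range] at hi
    rw [if_neg (by omega), zero_mul]

lemma ent_Marg_mul (N k : ℕ) (hN : 1 ≤ N) {d : ℕ}
    (v : Matrix (Fin (N ^ (k + 1))) (Fin d) ℝ) (r s : ℕ) (hr : r < N ^ k) :
    ent (Marg N k k le_rfl * v) r s = ∑ c ∈ Finset.range N, ent v (r * N + c) s := by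
  rw [ent_mul]
  simp only [ent_Marg N k hN]
  rw [sum_range_eq_mul _ (pow_succ N k), Finset.sum_eq_single r]
  · refine Finset.sum_congr rfl fun c hc => ?_
    rw [Finset.mem_range] at hc
    have : (r * N + c) / N = r := by
      rw [mul_comm, Nat.mul_add_div (by omega), Nat.div_eq_of_lt hc, add_zero]
    simp [this, hr]
  · intro b _ hb
    refine Finset.sum_eq_zero fun c hc => ?_
    rw [Finset.mem_range] at hc
    have : (b * N + c) / N = b := by
      rw [mul_comm, Nat.mul_add_div (by omega), Nat.div_eq_of_lt hc, add_zero]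
    rw [this, if_neg (by omega), zero_mul]
  · simp [hr]

lemma ent_Cyc_mul (N n : ℕ) {d : ℕ}
    (v : Matrix (Fin (N ^ (n + 1))) (Fin d) ℝ) (a i s : ℕ) (ha : a < N) (hi : i < N ^ n) :
    ent (Cyc N (n + 1) 1 (by omega) * v) (a * N ^ n + i) s = ent v (i * N + a) s := by
  rw [ent_mul]
  unfold Cyc
  simp only [ent_cast]
  have e : ∀ j, ent (commMat (N ^ 1) (N ^ (n + 1 - 1))) (a * N ^ n + i) j =
      if j = i * N + a then 1 else 0 := by
    intro j
    have := ent_comm (N ^ 1) (N ^ (n + 1 - 1)) a i j (by simpa using ha) (by simpa using hi)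
    simpa using this
  simp only [e]
  have : i * N + a < N ^ (n + 1) := by rw [pow_succ]; exact idx_lt hi ha
  simp [this]

lemma ent_MChain_mul (N : ℕ) (hN : 1 ≤ N) {d : ℕ} (m n : ℕ) (v : Matrix (Fin (N ^ (m + n + 1))) (Fin d) ℝ)
    (a s : ℕ) (ha : a < N ^ m) :
    ent (MChain N m n * v) a s =
      ∑ y ∈ Finset.range (N ^ (n + 1)), ent v (a * N ^ (n + 1) + y) s := by
  induction n with
  | zero =>
    unfold MChain
    rw [ent_Marg_mul N m hN v a s ha]
    simp
  | succ n ih =>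
    unfold MChain
    rw [Matrix.mul_assoc, ih]
    rw [pow_succ N (n + 1), sum_range_mul']
    refine Finset.sum_congr rfl fun y hy => ?_
    rw [Finset.mem_range] at hy
    have := ent_Marg_mul N (m + n + 1) hN v (a * N ^ (n + 1) + y) s
      (by rw [add_assoc, pow_add N m (n + 1)]; exact idx_lt ha hy)
    refine this.trans ?_
    refine Finset.sum_congr rfl fun c _ => ?_
    congr 1
    ring

/-- The joint law of the first `n` digits. -/
def PP (N : ℕ) (Q : (j : ℕ) → Fin (N ^ j) → Matrix (Fin N) (Fin 1) ℝ) : ℕ → ℕ → ℝ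
  | 0, _ => 1
  | n + 1, x => qx (Q n) (x / N) (x % N) * PP N Q n (x / N)

lemma ent_BChain0 (N : ℕ) (Q : (j : ℕ) → Fin (N ^ j) → Matrix (Fin N) (Fin 1) ℝ) (n x : ℕ) :
    ent (BChain N Q 0 n) x 0 = PP N Q (n + 1) x := by
  induction n generalizing x with
  | zero =>
    unfold BChain
    rw [ent_Branch]
    simp only [PP]
    by_cases h : x / N = 0
    · simp [h]
    · rw [if_neg h, qx, dif_neg (by simpa using h), zero_mul]
  | succ n ih =>
    unfold BChain
    rw [ent_Branch_mul, ih]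
    rw [PP.eq_2 N Q x (n + 1)]
    have : ∀ a b : ℕ, a = b → ∀ u v, qx (Q a) u v = qx (Q b) u v := by
      rintro a b rfl u v; rfl
    rw [this (0 + n + 1) (n + 1) (by omega)]

lemma ent_BChain1 (N : ℕ) (Q : (j : ℕ) → Fin (N ^ j) → Matrix (Fin N) (Fin 1) ℝ)
    (v : Matrix (Fin (N ^ 1)) (Fin 1) ℝ) (hv : ∀ x, ent v x 0 = PP N Q 1 x) (n x : ℕ) :
    ent (BChain N Q 1 n * v) x 0 = PP N Q (n + 2) x := by
  induction n generalizing x with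
  | zero =>
    unfold BChain
    rw [ent_Branch_mul, hv]
    rfl
  | succ n ih =>
    unfold BChain
    rw [Matrix.mul_assoc, ent_Branch_mul, ih]
    rw [show n + 1 + 2 = (n + 2) + 1 from rfl, PP.eq_2 N Q x (n + 2)]
    have : ∀ a b : ℕ, a = b → ∀ u v, qx (Q a) u v = qx (Q b) u v := by
      rintro a b rfl u v; rfl
    rw [this (1 + n + 1) (n + 2) (by omega)]

lemma ent_Shift_mul (N : ℕ) (hN : 1 ≤ N)
    (Q : (j : ℕ) → Fin (N ^ j) → Matrix (Fin N) (Fin 1) ℝ)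
    (v : Matrix (Fin (N ^ 1)) (Fin 1) ℝ) (hv : ∀ x, ent v x 0 = PP N Q 1 x) (n a : ℕ)
    (ha : a < N) :
    ent (Shift N 1 n Q * v) a 0 = ∑ y ∈ Finset.range (N ^ (n + 1)), PP N Q (n + 2) (y * N + a) := by
  unfold Shift
  rw [Matrix.mul_assoc, Matrix.mul_assoc, ent_MChain_mul N hN 1 n _ a 0 (by simpa using ha)]
  refine Finset.sum_congr rfl fun y hy => ?_
  rw [Finset.mem_range] at hy
  have := ent_Cyc_mul N (1 + n) (BChain N Q 1 n * v) a y 0 ha (by rwa [add_comm])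
  rw [← ent_BChain1 N Q v hv, ← this, show a * N ^ (1 + n) = a * N ^ (n + 1) by rw [add_comm]]

lemma ent_Trans_mul (N k : ℕ) (hN : 1 ≤ N) (hk : 1 ≤ k)
    (q : Fin (N ^ k) → Matrix (Fin N) (Fin 1) ℝ) (v : Matrix (Fin (N ^ k)) (Fin 1) ℝ)
    (a i : ℕ) (ha : a < N) (hi : i < N ^ (k - 1)) :
    ent (TransMat N k hk q * v) (a * N ^ (k - 1) + i) 0 =
      ∑ c ∈ Finset.range N, qx q (i * N + c) a * ent v (i * N + c) 0 := by
  have hNk : N ^ k = N ^ (k - 1) * N := by rw [← pow_succ]; congr 1; omega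
  unfold TransMat
  rw [Matrix.mul_assoc, ent_mul]
  simp only [ent_cast, ent_comm N (N ^ (k - 1)) a i _ ha hi]
  have hlt : i * N + a < N ^ k := by rw [hNk]; exact idx_lt hi ha
  have div' : ∀ b c, c < N → (b * N + c) / N = b := by
    intro b c hc
    rw [mul_comm, Nat.mul_add_div (by omega), Nat.div_eq_of_lt hc, add_zero]
  have mod' : ∀ b c, c < N → (b * N + c) % N = c := by
    intro b c hc
    rw [mul_comm, Nat.mul_add_mod, Nat.mod_eq_of_lt hc]
  have e : ∀ M : Matrix (Fin (N ^ k)) (Fin 1) ℝ,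
      (∑ x ∈ Finset.range (N ^ k), (if x = i * N + a then (1 : ℝ) else 0) * ent M x 0) =
        ent M (i * N + a) 0 := by
    intro M; simp [hlt]
  rw [e, ent_mul]
  simp only [ent_sum, ent_cast, ent_kron, ent_EE]
  rw [div' i a ha, mod' i a ha]
  have e2 : ∀ x, (∑ b : Fin (N ^ (k - 1)),
      (if i = (b : ℕ) ∧ x / N = (b : ℕ) then (1 : ℝ) else 0) * ent (Qblk N k hk q b) a (x % N)) =
      if x / N = i then qx q (i * N + x % N) a else 0 := by
    intro x
    rw [Finset.sum_eq_single (⟨i, hi⟩ : Fin (N ^ (k - 1)))]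
    · by_cases h : x / N = i
      · have hx := Nat.mod_lt x hN
        rw [if_pos ⟨rfl, h⟩, if_pos h, one_mul, ent, dif_pos ⟨ha, hx⟩]
        have hlt' : i * N + x % N < N ^ k := by rw [hNk]; exact idx_lt hi hx
        rw [qx, dif_pos hlt', ent, dif_pos ⟨ha, by omega⟩]
        simp only [Qblk, Matrix.of_apply]
        congr 2
        apply Fin.ext
        simp [pairIdx, mul_comm]
      · simp [h]
    · intro b _ hb
      have : i ≠ (b : ℕ) := fun h => hb (Fin.ext h.symm)
      simp [this]
    · simp
  simp only [e2]
  rw [sum_range_eq_mul _ hNk, Finset.sum_eq_single i]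
  · refine Finset.sum_congr rfl fun c hc => ?_
    rw [Finset.mem_range] at hc
    rw [div' i c hc, mod' i c hc, if_pos rfl]
  · intro b _ hb
    refine Finset.sum_eq_zero fun c hc => ?_
    rw [Finset.mem_range] at hc
    rw [div' b c hc, if_neg hb, zero_mul]
  · simp [hi]

lemma IsSimplex.ent_sum' {n : ℕ} {v : Matrix (Fin n) (Fin 1) ℝ} (h : IsSimplex v) :
    ∑ c ∈ Finset.range n, ent v c 0 = 1 := by
  rw [Finset.sum_range, ← h.2]
  exact Finset.sum_congr rfl fun c _ => ent_fin v c 0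

lemma qx_sum {N L : ℕ} (q : Fin L → Matrix (Fin N) (Fin 1) ℝ) (h : ∀ i, IsSimplex (q i))
    (x : ℕ) (hx : x < L) : ∑ c ∈ Finset.range N, qx q x c = 1 := by
  simp only [qx, dif_pos hx]
  exact (h _).ent_sum'

lemma PP_marg (N : ℕ) (Q : (j : ℕ) → Fin (N ^ j) → Matrix (Fin N) (Fin 1) ℝ) (n x : ℕ)
    (hx : x < N ^ n) (h : ∀ i, IsSimplex (Q n i)) :
    ∑ c ∈ Finset.range N, PP N Q (n + 1) (x * N + c) = PP N Q n x := by
  rw [← one_mul (PP N Q n x), ← qx_sum (Q n) h x hx, Finset.sum_mul]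
  refine Finset.sum_congr rfl fun c hc => ?_
  rw [Finset.mem_range] at hc
  rw [PP, mul_comm x N, Nat.mul_add_div (by omega), Nat.div_eq_of_lt hc, Nat.mul_add_mod,
    Nat.mod_eq_of_lt hc, add_zero]

lemma PP_congr (N : ℕ) (Q Q' : (j : ℕ) → Fin (N ^ j) → Matrix (Fin N) (Fin 1) ℝ) (n x : ℕ)
    (h : ∀ j < n, Q j = Q' j) : PP N Q n x = PP N Q' n x := by
  induction n generalizing x with
  | zero => rfl
  | succ n ih => rw [PP, PP, ih _ fun j hj => h j (by omega), h n (by omega)]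

/-- Marginal over the leading digits. -/
lemma PP_tail (N : ℕ) (P : ℕ → ℕ → ℝ) (n k : ℕ)
    (hm : ∀ n < k, ∀ x < N ^ n, ∑ c ∈ Finset.range N, P (n + 1) (x * N + c) = P n x)
    (x : ℕ) (hn : n ≤ k) (hx : x < N ^ n) :
    ∑ c ∈ Finset.range (N ^ (k - n)), P k (x * N ^ (k - n) + c) = P n x := by
  obtain ⟨d, rfl⟩ := Nat.exists_eq_add_of_le hn
  rw [Nat.add_sub_cancel_left]
  clear hn
  induction d with
  | zero => simp
  | succ d ih =>
    rw [← ih fun m h => hm m (by omega)]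
    rw [pow_succ, sum_range_mul']
    refine Finset.sum_congr rfl fun y hy => ?_
    rw [Finset.mem_range] at hy
    rw [← hm (n + d) (by omega) _ (by rw [pow_add]; exact idx_lt hx hy)]
    refine Finset.sum_congr rfl fun c _ => ?_
    rw [add_assoc n d 1]
    congr 1
    ring

lemma PP_shift (N : ℕ) (P : ℕ → ℕ → ℝ) (k : ℕ)
    (hm : ∀ n < k + 1, ∀ x < N ^ n, ∑ c ∈ Finset.range N, P (n + 1) (x * N + c) = P n x)
    (hs : ∀ x < N ^ k, ∑ a ∈ Finset.range N, P (k + 1) (a * N ^ k + x) = P k x)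
    (d n : ℕ) (hd : n + d = k) (x : ℕ) (hx : x < N ^ n) :
    ∑ a ∈ Finset.range N, P (n + 1) (a * N ^ n + x) = P n x := by
  induction d generalizing n x with
  | zero => obtain rfl : n = k := by omega
            exact hs x hx
  | succ d ih =>
    have h1 : ∀ a ∈ Finset.range N, P (n + 1) (a * N ^ n + x) =
        ∑ c ∈ Finset.range N, P (n + 2) (a * N ^ (n + 1) + (x * N + c)) := by
      intro a ha
      rw [Finset.mem_range] at ha
      rw [← hm (n + 1) (by omega) _ (by rw [pow_succ']; exact idx_lt ha hx)]
      refine Finset.sum_congr rfl fun c _ => ?_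
      congr 1
      ring
    rw [Finset.sum_congr rfl h1, Finset.sum_comm, ← hm n (by omega) x hx]
    refine Finset.sum_congr rfl fun c hc => ?_
    rw [Finset.mem_range] at hc
    exact ih (n + 1) (by omega) _ (by rw [pow_succ]; exact idx_lt hx hc)

lemma PP_last (N : ℕ) (P : ℕ → ℕ → ℝ) (k : ℕ)
    (hs : ∀ n ≤ k, ∀ x < N ^ n, ∑ a ∈ Finset.range N, P (n + 1) (a * N ^ n + x) = P n x)
    (n : ℕ) (hn : n ≤ k) (a : ℕ) (ha : a < N) :
    ∑ y ∈ Finset.range (N ^ n), P (n + 1) (y * N + a) = P 1 a := by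
  induction n with
  | zero => simp
  | succ n ih =>
    rw [← ih (by omega), pow_succ', sum_range_mul', Finset.sum_comm]
    refine Finset.sum_congr rfl fun j hj => ?_
    rw [Finset.mem_range] at hj
    rw [← hs (n + 1) hn _ (by rw [pow_succ]; exact idx_lt hj ha)]
    refine Finset.sum_congr rfl fun b _ => ?_
    congr 1
    ring

lemma ent_ext {a : ℕ} (A B : Matrix (Fin a) (Fin 1) ℝ)
    (h : ∀ x < a, ent A x 0 = ent B x 0) : A = B := by
  ext i j
  obtain rfl : j = 0 := Subsingleton.elim _ _
  have := h i i.isLt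
  rwa [show (0 : ℕ) = ((0 : Fin 1) : ℕ) from rfl, ent_fin, ent_fin] at this

/-- Lemma on the marginal stationary distribution:
if `θ = B^{k-1}_{k-1}(Θ^(k-1)) ⋯ B^0_0(Θ^(0))` is stationary for `Q^(k)`, then the
marginal `θ^(0)` satisfies `θ^(0) = S(Θ^(1),…,Θ^(m)) θ^(0)` for `1 ≤ m ≤ k-1` and
`θ^(0) = S(Θ^(1),…,Θ^(k-1),𝒬) θ^(0)`. -/
theorem stmt11 (N k : ℕ) (hN : 1 ≤ N) (hk : 2 ≤ k)
    (Θ : (m : ℕ) → Fin (N ^ m) → Matrix (Fin N) (Fin 1) ℝ)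
    (hΘ : ∀ m, m ≤ k - 1 → ∀ i, IsSimplex (Θ m i))
    (q : Fin (N ^ k) → Matrix (Fin N) (Fin 1) ℝ) (hq : ∀ i, IsSimplex (q i))
    (θ : Matrix (Fin (N ^ k)) (Fin 1) ℝ)
    (hθ : θ = castM (congrArg (N ^ ·) (by omega)) (by norm_num) (BChain N Θ 0 (k - 1)))
    (hstat : θ = TransMat N k (by omega) q * θ) :
    (∀ m, 1 ≤ m → m ≤ k - 1 →
      castM (pow_one N).symm rfl (Θ 0 ⟨0, by simp⟩) =
        Shift N 1 (m - 1) Θ * castM (pow_one N).symm rfl (Θ 0 ⟨0, by simp⟩)) ∧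
    castM (pow_one N).symm rfl (Θ 0 ⟨0, by simp⟩) =
      Shift N 1 (k - 1)
          (fun j => if h : j = k then (fun i => q (finCongr (by rw [h]) i)) else Θ j) *
        castM (pow_one N).symm rfl (Θ 0 ⟨0, by simp⟩) := by
  obtain ⟨k, rfl⟩ : ∃ k', k = k' + 1 := ⟨k - 1, by omega⟩
  simp only [Nat.add_sub_cancel] at *
  have hv : ∀ x, ent (castM (pow_one N).symm rfl (Θ 0 ⟨0, by simp⟩)) x 0 = PP N Θ 1 x := by
    intro x
    rw [ent_cast, PP, PP, mul_one]
    by_cases hx : x < N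
    · rw [Nat.div_eq_of_lt hx, Nat.mod_eq_of_lt hx, qx, dif_pos (by simp)]
    · rw [ent_out _ _ _ (by omega), qx, dif_neg]
      rw [pow_zero, Nat.lt_one_iff, Nat.div_eq_zero_iff]
      omega
  have hθP : ∀ x, ent θ x 0 = PP N Θ (k + 1) x := by
    intro x
    rw [hθ, ent_cast, ent_BChain0, Nat.add_sub_cancel]
  have hm : ∀ n < k + 1, ∀ x < N ^ n,
      ∑ c ∈ Finset.range N, PP N Θ (n + 1) (x * N + c) = PP N Θ n x :=
    fun n hn x hx => PP_marg N Θ n x hx (hΘ n (by omega))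
  have hst : ∀ a < N, ∀ i < N ^ k, PP N Θ (k + 1) (a * N ^ k + i) =
      ∑ c ∈ Finset.range N, qx q (i * N + c) a * PP N Θ (k + 1) (i * N + c) := by
    intro a ha i hi
    have := ent_Trans_mul N (k + 1) hN (by omega) q θ a i ha (by simpa using hi)
    rw [← hstat] at this
    simpa only [Nat.add_sub_cancel, hθP] using this
  have hs : ∀ x < N ^ k,
      ∑ a ∈ Finset.range N, PP N Θ (k + 1) (a * N ^ k + x) = PP N Θ k x := by
    intro x hx
    rw [Finset.sum_congr rfl fun a ha => hst a (Finset.mem_range.1 ha) x hx, Finset.sum_comm,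
      ← hm k (by omega) x hx]
    refine Finset.sum_congr rfl fun c hc => ?_
    rw [Finset.mem_range] at hc
    rw [← Finset.sum_mul, qx_sum q hq _ (by rw [pow_succ]; exact idx_lt hx hc), one_mul]
  have hs' : ∀ n ≤ k, ∀ x < N ^ n,
      ∑ a ∈ Finset.range N, PP N Θ (n + 1) (a * N ^ n + x) = PP N Θ n x :=
    fun n hn x hx => PP_shift N (PP N Θ) k hm hs (k - n) n (by omega) x hx
  constructor
  · intro m hm1 hmk
    obtain ⟨m, rfl⟩ : ∃ m', m = m' + 1 := ⟨m - 1, by omega⟩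
    apply ent_ext
    intro a ha
    rw [pow_one] at ha
    rw [Nat.add_sub_cancel, ent_Shift_mul N hN Θ _ hv m a ha, hv]
    exact (PP_last N (PP N Θ) k hs' (m + 1) hmk a ha).symm
  · apply ent_ext
    intro a ha
    rw [pow_one] at ha
    set Q : (j : ℕ) → Fin (N ^ j) → Matrix (Fin N) (Fin 1) ℝ :=
      fun j => if h : j = k + 1 then (fun i => q (finCongr (by rw [h]) i)) else Θ j with hQ
    have hQΘ : ∀ n ≤ k + 1, ∀ x, PP N Q n x = PP N Θ n x := fun n hn x =>
      PP_congr N Q Θ n x fun j hj => by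
        simp only [hQ]
        rw [dif_neg (by omega)]
    have hQk : Q (k + 1) = q := by
      simp only [hQ, dif_pos]
      rfl
    rw [ent_Shift_mul N hN Q _ (fun x => by rw [hv, hQΘ 1 (by omega)]) k a ha, hv]
    have h1 : ∀ y, PP N Q (k + 2) (y * N + a) = qx q y a * PP N Θ (k + 1) y := by
      intro y
      rw [PP, hQk, hQΘ _ le_rfl, mul_comm y N, Nat.mul_add_div (by omega), Nat.div_eq_of_lt ha,
        Nat.mul_add_mod, Nat.mod_eq_of_lt ha, add_zero]
    simp only [h1]
    rw [sum_range_eq_mul _ (pow_succ N k)]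
    rw [← Finset.sum_congr rfl fun i hi => hst a ha i (Finset.mem_range.1 hi)]
    have := PP_tail N (PP N Θ) 1 (k + 1) hm a (by omega) (by simpa using ha)
    rw [Nat.add_sub_cancel] at this
    exact this.symm
end
end
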